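/- arXiv:0805.2140 — 8 statements merged into one kernel-verified Lean document; each statement's English description precedes it below -/
import Mathlib

section
/- Let A be a commutative ring and K its total quotient ring, i.e. the localization of A at the multiplicative set of nonzerodivisors. Let n ≥ 1 and let φ : Aⁿ → Aⁿ be an A-linear map with cokernel F. Then F ⊗_A K = 0 if and only if φ is injective. -/
/-!
The determinant of an endomorphism `f` of a finite free module controls both sides. By right
exactness of the tensor product, `coker f ⊗ K = 0` says that the base change of `f` to `K` is
surjective; since surjective endomorphisms of finite modules are bijective, this says that the
image of `det f` in `K` is a unit, which for the total quotient ring means that `det f` is a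
nonzerodivisor. By McCoy's theorem, this is also equivalent to the injectivity of `f`.
-/

open scoped TensorProduct nonZeroDivisors

section CommRing

variable {A M : Type*} [CommRing A] [AddCommGroup M] [Module A M]

theorem subsingleton_coker_tensorProduct_iff_surjective_lTensor {N : Type*} [AddCommGroup N]
    [Module A N] (Q : Type*) [AddCommGroup Q] [Module A Q] (f : M →ₗ[A] N) :
    Subsingleton ((N ⧸ f.range) ⊗[A] Q) ↔ Function.Surjective (f.lTensor Q) := by
  have cokerEquiv : ((Q ⊗[A] N) ⧸ (f.lTensor Q).range) ≃ₗ[A] Q ⊗[A] (N ⧸ f.range) :=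
    lTensor.equiv Q f.exact_map_mkQ_range f.range.mkQ_surjective
  rw [← (cokerEquiv ≪≫ₗ TensorProduct.comm A _ _).toEquiv.subsingleton_congr,
    Submodule.Quotient.subsingleton_iff, LinearMap.range_eq_top]

theorem isUnit_algebraMap_iff_mem_nonZeroDivisors (K : Type*) [CommRing K] [Algebra A K]
    [IsFractionRing A K] {a : A} : IsUnit (algebraMap A K a) ↔ a ∈ A⁰ := by
  rw [IsLocalization.algebraMap_isUnit_iff A⁰]
  constructor
  · rintro ⟨_, hm, _, rfl⟩
    exact (mul_mem_nonZeroDivisors.mp hm).1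
  · exact fun ha ↦ ⟨a, ha, dvd_rfl⟩

theorem mulVec_injective_iff_det_mem_nonZeroDivisors {ι : Type*} [Fintype ι] [DecidableEq ι]
    {P : Matrix ι ι A} : Function.Injective P.mulVec ↔ P.det ∈ A⁰ := by
  rw [Matrix.mulVec_injective_iff, Matrix.linearIndependent_col_iff,
    Matrix.nonsingular_iff_det_mem_nonZeroDivisors]

section FiniteFree

variable [Module.Free A M] [Module.Finite A M] (f : M →ₗ[A] M)

theorem injective_iff_det_mem_nonZeroDivisors :
    Function.Injective f ↔ LinearMap.det f ∈ A⁰ := by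
  let b := Module.Free.chooseBasis A M
  have mulVec_comp_equivFun : (LinearMap.toMatrix b b f).mulVec ∘ b.equivFun = b.equivFun ∘ f :=
    funext (LinearMap.toMatrix_mulVec_repr b b f)
  rw [← LinearMap.det_toMatrix b, ← mulVec_injective_iff_det_mem_nonZeroDivisors,
    ← b.equivFun.injective.of_comp_iff f, ← mulVec_comp_equivFun]
  exact Function.Injective.of_comp_iff' _ b.equivFun.bijective

theorem surjective_iff_isUnit_det : Function.Surjective f ↔ IsUnit (LinearMap.det f) := by
  rw [← LinearMap.isUnit_iff_isUnit_det, Module.End.isUnit_iff]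
  exact ⟨OrzechProperty.bijective_of_surjective_endomorphism f, Function.Bijective.surjective⟩

theorem subsingleton_coker_tensorProduct_iff_isUnit_algebraMap_det (B : Type*) [CommRing B]
    [Algebra A B] :
    Subsingleton ((M ⧸ f.range) ⊗[A] B) ↔ IsUnit (algebraMap A B (LinearMap.det f)) := by
  rw [subsingleton_coker_tensorProduct_iff_surjective_lTensor, ← LinearMap.baseChange_eq_ltensor,
    surjective_iff_isUnit_det, LinearMap.det_baseChange]

theorem statement1_general (K : Type*) [CommRing K] [Algebra A K] [IsFractionRing A K] :
    Subsingleton ((M ⧸ f.range) ⊗[A] K) ↔ Function.Injective f := by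
  rw [subsingleton_coker_tensorProduct_iff_isUnit_algebraMap_det,
    isUnit_algebraMap_iff_mem_nonZeroDivisors, injective_iff_det_mem_nonZeroDivisors]

end FiniteFree

end CommRing

/-- Let `A` be a commutative ring and `K = Localization (nonZeroDivisors A)`
its total quotient ring.  For `n ≥ 1` and an `A`-linear map `φ : Aⁿ → Aⁿ` with cokernel
`F = Aⁿ ⧸ range φ`, we have `F ⊗[A] K = 0` if and only if `φ` is injective. -/
theorem statement1 {A : Type*} [CommRing A] (n : ℕ) (hn : 1 ≤ n)
    (φ : (Fin n → A) →ₗ[A] (Fin n → A)) :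
    Subsingleton (TensorProduct A ((Fin n → A) ⧸ LinearMap.range φ)
        (Localization (nonZeroDivisors A))) ↔ Function.Injective φ :=
  statement1_general φ (Localization (nonZeroDivisors A))
end

section
/- Let A be a commutative ring with total quotient ring K (the localization of A at the nonzerodivisors), and let K/A denote the quotient of K by the image of the canonical map A → K, viewed as an A-module. Let n ≥ 1 and let φ : Aⁿ → Aⁿ be an injective A-linear map with cokernel F (so F is a torsion module with few relations). Define the Pontryagin dual of an A-module M as M† = Hom_A(M, K/A). Then the canonical evaluation map F → (F†)†, sending x to the homomorphism u ↦ u(x), is an isomorphism of A-modules. -/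
/-- The total quotient ring of a commutative ring `A`: the localization of `A` at the
multiplicative set of nonzerodivisors. -/
abbrev TotalQuotientRing (A : Type*) [CommRing A] : Type _ :=
  Localization (nonZeroDivisors A)

/-- The `A`-module `K/A`, the quotient of the total quotient ring `K` by the image of the
canonical map `A → K`. -/
abbrev KModA (A : Type*) [CommRing A] : Type _ :=
  TotalQuotientRing A ⧸ LinearMap.range (Algebra.linearMap A (TotalQuotientRing A))

/-!
Let `M` be the matrix of `φ`. By McCoy's theorem its determinant is a nonzerodivisor, so `M` is
invertible over `K`, and `(y, x) ↦ yᵀ M⁻¹ x` induces a pairing `coker Mᵀ × coker M → K/A`.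
A homomorphism `Aⁿ → K/A` lifts to a row vector `k` over `K`; it vanishes on `M Aⁿ` exactly when
`k M` is a row vector `yᵀ` over `A`, that is, when `k = yᵀ M⁻¹`. So the pairing identifies
`coker Mᵀ` with the dual of `coker M` and, exchanging `M` and `Mᵀ`, also `coker M` with the dual of
`coker Mᵀ`. Composing the two identifications gives the evaluation map.
-/

open Matrix Function

section McCoy

variable {R m ι : Type*} [CommRing R]

theorem mulVec_minors_eq_det_cons {k : ℕ} (M : Matrix m (Fin (k + 1)) R) (r : Fin k → m) (i : m) :
    (M *ᵥ fun l ↦ (-1) ^ (l : ℕ) * (M.submatrix r l.succAbove).det) i =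
      (M.submatrix (Fin.cons i r : Fin (k + 1) → m) id).det := by
  rw [det_succ_row_zero, mulVec, dotProduct]
  refine Finset.sum_congr rfl fun l _ ↦ ?_
  have minor_eq : (M.submatrix (Fin.cons i r : Fin (k + 1) → m) id).submatrix Fin.succ
      l.succAbove = M.submatrix r l.succAbove := rfl
  rw [minor_eq, submatrix_apply, Fin.cons_zero, id, mul_left_comm, mul_assoc]

theorem mulVec_submatrix_succ_injective {k : ℕ} {M : Matrix m (Fin (k + 1)) R}
    (hM : Injective M.mulVec) : Injective (M.submatrix id Fin.succ).mulVec := by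
  have mulVec_tail (w : Fin k → R) :
      M.submatrix id Fin.succ *ᵥ w = M *ᵥ (Fin.cons 0 w : Fin (k + 1) → R) := by
    ext i
    simp [mulVec, dotProduct, Fin.sum_univ_succ]
  intro v w hvw
  simp only [mulVec_tail] at hvw
  exact Fin.cons_right_injective (α := fun _ ↦ R) 0 (hM hvw)

/-- McCoy's theorem. For a choice of `k` rows, the signed minors that omit one of the `k + 1`
columns form a vector which `M` sends to a vector of maximal minors. As `M` is injective, `a` kills
them; those that omit the first column are the maximal minors of the remaining columns. -/
theorem eq_zero_of_forall_mul_maximal_minor_eq_zero {k : ℕ} (M : Matrix m (Fin k) R)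
    (hM : Injective M.mulVec) {a : R} (ha : ∀ r : Fin k → m, a * (M.submatrix r id).det = 0) :
    a = 0 := by
  induction k with
  | zero => simpa using ha Fin.elim0
  | succ k ih =>
    refine ih _ (mulVec_submatrix_succ_injective hM) fun r ↦ ?_
    have minors_relation :
        (a • fun l : Fin (k + 1) ↦ (-1) ^ (l : ℕ) * (M.submatrix r l.succAbove).det) = 0 := by
      apply hM
      ext i
      rw [mulVec_smul, Pi.smul_apply, mulVec_minors_eq_det_cons, smul_eq_mul, ha, mulVec_zero,
        Pi.zero_apply]
    simpa using congrFun minors_relation 0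

theorem det_mem_nonZeroDivisors_of_mulVec_injective [Fintype ι] [DecidableEq ι]
    {M : Matrix ι ι R} (hM : Injective M.mulVec) : M.det ∈ nonZeroDivisors R := by
  let e : Fin (Fintype.card ι) ≃ ι := (Fintype.equivFin ι).symm
  refine mem_nonZeroDivisors_iff_right.2 fun a ha ↦
    eq_zero_of_forall_mul_maximal_minor_eq_zero (M.submatrix id e) ?_ fun r ↦ ?_
  · intro v w hvw
    simp only [submatrix_mulVec_equiv, comp_id] at hvw
    exact e.symm.surjective.injective_comp_right (hM hvw)
  · have minor_eq : (M.submatrix id e).submatrix r id =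
        (1 : Matrix ι ι R).submatrix r e * M.submatrix e e := by
      rw [submatrix_mul_equiv, one_mul, submatrix_submatrix, id_comp, comp_id]
    rw [minor_eq, det_mul, det_submatrix_equiv_self, mul_left_comm, ha, mul_zero]

theorem linearMap_det_mem_nonZeroDivisors_of_injective {P : Type*} [AddCommGroup P] [Module R P]
    [Module.Finite R P] [Module.Free R P] {φ : P →ₗ[R] P} (hφ : Injective φ) :
    LinearMap.det φ ∈ nonZeroDivisors R := by
  classical
  let b := Module.Free.chooseBasis R P
  rw [← LinearMap.det_toMatrix b]
  refine det_mem_nonZeroDivisors_of_mulVec_injective ?_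
  have toMatrix_mulVec : (LinearMap.toMatrix b b φ).mulVec = b.equivFun ∘ φ ∘ b.equivFun.symm := by
    funext v
    have := LinearMap.toMatrix_mulVec_repr b b φ (b.equivFun.symm v)
    rwa [← b.equivFun_apply, LinearEquiv.apply_symm_apply] at this
  rw [toMatrix_mulVec]
  exact b.equivFun.injective.comp (hφ.comp b.equivFun.symm.injective)

end McCoy

theorem bijective_applyₗ_of_bijective_of_bijective_flip {R M N Q : Type*}
    [CommSemiring R] [AddCommMonoid M] [Module R M] [AddCommMonoid N] [Module R N]
    [AddCommMonoid Q] [Module R Q]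
    {B : N →ₗ[R] M →ₗ[R] Q} (hB : Bijective B) (hB_flip : Bijective B.flip) :
    Bijective (LinearMap.applyₗ : M →ₗ[R] (M →ₗ[R] Q) →ₗ[R] Q) := by
  let e : ((M →ₗ[R] Q) →ₗ[R] Q) ≃ₗ[R] (N →ₗ[R] Q) :=
    (LinearEquiv.ofBijective B hB).symm.congrLeft Q R
  exact (e.bijective.of_comp_iff' _).1 hB_flip

section Duality

variable (A K : Type*) [CommRing A] [CommRing K] [Algebra A K] {m n : Type*} [Fintype m] [Fintype n]

/-- The `A`-module `K/A` for an arbitrary `A`-algebra `K`; it generalizes `KModA`. -/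
abbrev AlgebraCokernel : Type _ := K ⧸ LinearMap.range (Algebra.linearMap A K)

/-- The homomorphism `Aⁿ → K/A`, `x ↦ k ⬝ᵥ x mod A`, attached to a row vector `k` over `K`. It
presents the dual of `Aⁿ` as a quotient of `Kⁿ`. -/
noncomputable def residueFunctional : (n → K) →ₗ[A] (n → A) →ₗ[A] AlgebraCokernel A K :=
  (Fintype.bilinearCombination A A).compr₂ (Submodule.mkQ _)

variable {A K}

theorem residueFunctional_apply (k : n → K) (x : n → A) :
    residueFunctional A K k x = Submodule.Quotient.mk (k ⬝ᵥ (algebraMap A K ∘ x)) := by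
  change Submodule.Quotient.mk (∑ i, x i • k i) = _
  simp only [dotProduct, Function.comp_apply, Algebra.smul_def, mul_comm]

theorem residueFunctional_single [DecidableEq n] (k : n → K) (i : n) :
    residueFunctional A K k (Pi.single i 1) = Submodule.Quotient.mk (k i) := by
  simp [residueFunctional]

theorem residueFunctional_eq_zero_iff {k : n → K} :
    residueFunctional A K k = 0 ↔ ∃ a : n → A, algebraMap A K ∘ a = k := by
  classical
  constructor
  · intro hk
    have integral (i : n) : ∃ a, algebraMap A K a = k i := by
      have := LinearMap.congr_fun hk (Pi.single i 1)
      rwa [residueFunctional_single, LinearMap.zero_apply, Submodule.Quotient.mk_eq_zero] at this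
    choose a ha using integral
    exact ⟨a, funext ha⟩
  · rintro ⟨a, rfl⟩
    ext i
    simp [residueFunctional_single]

theorem residueFunctional_surjective : Surjective (residueFunctional A K (n := n)) := by
  classical
  intro f
  choose k hk using fun i ↦ Submodule.Quotient.mk_surjective _ (f (Pi.single i 1))
  refine ⟨k, LinearMap.pi_ext' fun i ↦ LinearMap.ext_ring ?_⟩
  simpa [residueFunctional_single] using hk i

theorem residueFunctional_comp_mulVecLin (M : Matrix m n A) (k : m → K) :
    residueFunctional A K k ∘ₗ M.mulVecLin =
      residueFunctional A K (k ᵥ* M.map (algebraMap A K)) := by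
  refine LinearMap.ext fun x ↦ ?_
  have map_mulVec : algebraMap A K ∘ (M *ᵥ x) = M.map (algebraMap A K) *ᵥ (algebraMap A K ∘ x) :=
    funext (RingHom.map_mulVec _ M x)
  rw [LinearMap.comp_apply, mulVecLin_apply, residueFunctional_apply, residueFunctional_apply,
    map_mulVec, dotProduct_mulVec]

variable [DecidableEq n] {M : Matrix n n A}

variable (K M) in
/-- The pairing `(y, x) ↦ yᵀ M⁻¹ x mod A` on `Aⁿ`, with `M⁻¹` computed over `K`. If `M` is not
invertible over `K`, then `M⁻¹` is `0` by convention, and so is the pairing. -/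
noncomputable def inversePairing : (n → A) →ₗ[A] (n → A) →ₗ[A] AlgebraCokernel A K :=
  residueFunctional A K ∘ₗ (M.map (algebraMap A K))⁻¹.vecMulLinear.restrictScalars A ∘ₗ
    (Algebra.linearMap A K).compLeft n

theorem inversePairing_apply (y : n → A) :
    inversePairing K M y =
      residueFunctional A K ((algebraMap A K ∘ y) ᵥ* (M.map (algebraMap A K))⁻¹) :=
  rfl

theorem inversePairing_flip : (inversePairing K M).flip = inversePairing K Mᵀ := by
  refine LinearMap.ext₂ fun x y ↦ ?_
  rw [LinearMap.flip_apply, inversePairing_apply, inversePairing_apply, residueFunctional_apply,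
    residueFunctional_apply, transpose_map, ← transpose_nonsing_inv, vecMul_transpose,
    ← dotProduct_mulVec, dotProduct_comm]

theorem inversePairing_comp_mulVecLin (hM : IsUnit (M.map (algebraMap A K)).det) (y : n → A) :
    inversePairing K M y ∘ₗ M.mulVecLin = 0 := by
  rw [inversePairing_apply, residueFunctional_comp_mulVecLin, vecMul_vecMul, nonsing_inv_mul _ hM,
    vecMul_one, residueFunctional_eq_zero_iff]
  exact ⟨y, rfl⟩

theorem range_mulVecLin_le_ker_inversePairing_flip (hM : IsUnit (M.map (algebraMap A K)).det) :
    LinearMap.range M.mulVecLin ≤ (inversePairing K M).flip.ker := by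
  rintro _ ⟨x, rfl⟩
  exact LinearMap.ext fun y ↦ LinearMap.congr_fun (inversePairing_comp_mulVecLin hM y) x

theorem isUnit_det_map_transpose (hM : IsUnit (M.map (algebraMap A K)).det) :
    IsUnit (Mᵀ.map (algebraMap A K)).det := by
  rwa [transpose_map, det_transpose]

theorem range_transpose_mulVecLin_le_ker_inversePairing
    (hM : IsUnit (M.map (algebraMap A K)).det) :
    LinearMap.range Mᵀ.mulVecLin ≤ (inversePairing K M).ker := by
  have := range_mulVecLin_le_ker_inversePairing_flip (isUnit_det_map_transpose hM)
  rwa [inversePairing_flip] at this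

/-- The pairing `coker Mᵀ × coker M → K/A` induced by `(y, x) ↦ yᵀ M⁻¹ x`, for `M` invertible over
`K`. It is perfect when `A → K` is injective. -/
noncomputable def cokernelPairing (hM : IsUnit (M.map (algebraMap A K)).det) :
    ((n → A) ⧸ LinearMap.range Mᵀ.mulVecLin) →ₗ[A] ((n → A) ⧸ LinearMap.range M.mulVecLin) →ₗ[A]
      AlgebraCokernel A K :=
  (inversePairing K M).liftQ₂ _ _ (range_transpose_mulVecLin_le_ker_inversePairing hM)
    (range_mulVecLin_le_ker_inversePairing_flip hM)

theorem cokernelPairing_flip (hM : IsUnit (M.map (algebraMap A K)).det) :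
    (cokernelPairing hM).flip = cokernelPairing (isUnit_det_map_transpose hM) := by
  refine Submodule.linearMap_qext _ (LinearMap.ext fun x ↦
    Submodule.linearMap_qext _ (LinearMap.ext fun y ↦ ?_))
  exact LinearMap.congr_fun₂ inversePairing_flip x y

theorem cokernelPairing_injective [FaithfulSMul A K] (hM : IsUnit (M.map (algebraMap A K)).det) :
    Injective (cokernelPairing hM) := by
  refine (injective_iff_map_eq_zero _).2 fun y hy ↦ ?_
  obtain ⟨y, rfl⟩ := Submodule.Quotient.mk_surjective _ y
  have pairing_eq_zero : inversePairing K M y = 0 :=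
    congrArg (· ∘ₗ (LinearMap.range M.mulVecLin).mkQ) hy
  rw [inversePairing_apply, residueFunctional_eq_zero_iff] at pairing_eq_zero
  obtain ⟨a, ha⟩ := pairing_eq_zero
  refine (Submodule.Quotient.mk_eq_zero _).2 ⟨a, ?_⟩
  apply (FaithfulSMul.algebraMap_injective A K).comp_left
  rw [mulVecLin_apply, mulVec_transpose]
  calc algebraMap A K ∘ (a ᵥ* M) = (algebraMap A K ∘ a) ᵥ* M.map (algebraMap A K) :=
        funext (RingHom.map_vecMul _ _ _)
    _ = algebraMap A K ∘ y := by rw [ha, vecMul_vecMul, nonsing_inv_mul _ hM, vecMul_one]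

theorem cokernelPairing_surjective (hM : IsUnit (M.map (algebraMap A K)).det) :
    Surjective (cokernelPairing hM) := by
  intro f
  obtain ⟨k, hk⟩ := residueFunctional_surjective (f ∘ₗ (LinearMap.range M.mulVecLin).mkQ)
  have vecMul_residue : residueFunctional A K (k ᵥ* M.map (algebraMap A K)) = 0 := by
    rw [← residueFunctional_comp_mulVecLin, hk, LinearMap.comp_assoc, LinearMap.range_mkQ_comp,
      LinearMap.comp_zero]
  obtain ⟨y, hy⟩ := residueFunctional_eq_zero_iff.1 vecMul_residue
  refine ⟨Submodule.Quotient.mk y, Submodule.linearMap_qext _ ?_⟩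
  calc inversePairing K M y = residueFunctional A K k := by
        rw [inversePairing_apply, hy, vecMul_vecMul, mul_nonsing_inv _ hM, vecMul_one]
    _ = f ∘ₗ (LinearMap.range M.mulVecLin).mkQ := hk

theorem cokernelPairing_bijective [FaithfulSMul A K] (hM : IsUnit (M.map (algebraMap A K)).det) :
    Bijective (cokernelPairing hM) :=
  ⟨cokernelPairing_injective hM, cokernelPairing_surjective hM⟩

end Duality

theorem statement2_general {A K ι : Type*} [CommRing A] [CommRing K] [Algebra A K]
    [FaithfulSMul A K] [Finite ι] (φ : (ι → A) →ₗ[A] (ι → A))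
    (hφ : IsUnit (algebraMap A K (LinearMap.det φ))) :
    Bijective (LinearMap.applyₗ : ((ι → A) ⧸ LinearMap.range φ) →ₗ[A]
      (((ι → A) ⧸ LinearMap.range φ) →ₗ[A] AlgebraCokernel A K) →ₗ[A] AlgebraCokernel A K) := by
  classical
  have := Fintype.ofFinite ι
  obtain ⟨M, rfl⟩ := (toLin' : Matrix ι ι A ≃ₗ[A] _).surjective φ
  rw [LinearMap.det_toLin', RingHom.map_det, RingHom.mapMatrix_apply] at hφ
  rw [toLin'_apply']
  refine bijective_applyₗ_of_bijective_of_bijective_flip (cokernelPairing_bijective hφ) ?_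
  rw [cokernelPairing_flip]
  exact cokernelPairing_bijective (isUnit_det_map_transpose hφ)

/-- Let `A` be a commutative ring, `K` its total quotient ring and
`K/A` the quotient `A`-module.  Let `φ : Aⁿ → Aⁿ` (`n ≥ 1`) be an injective `A`-linear
map with cokernel `F` (a torsion module with few relations).  Writing `M† = Hom_A(M, K/A)`
for the Pontryagin dual, the canonical evaluation map `F → (F†)†`, `x ↦ (u ↦ u x)`,
is an isomorphism of `A`-modules. -/
theorem statement2 {A : Type*} [CommRing A] (n : ℕ) (hn : 1 ≤ n)
    (φ : (Fin n → A) →ₗ[A] (Fin n → A)) (hφ : Function.Injective φ) :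
    ∃ e : ((Fin n → A) ⧸ LinearMap.range φ) →ₗ[A]
        ((((Fin n → A) ⧸ LinearMap.range φ) →ₗ[A] KModA A) →ₗ[A] KModA A),
      (∀ (x : (Fin n → A) ⧸ LinearMap.range φ)
          (u : ((Fin n → A) ⧸ LinearMap.range φ) →ₗ[A] KModA A), e x u = u x) ∧
      Function.Bijective e := by
  have det_mem := linearMap_det_mem_nonZeroDivisors_of_injective hφ
  exact ⟨LinearMap.applyₗ, fun _ _ ↦ rfl,
    statement2_general φ (IsLocalization.map_units _ ⟨_, det_mem⟩)⟩
end

section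
/- Let A be a commutative ring with total quotient ring K (localization of A at the nonzerodivisors), and set K/A = coker(A → K) as an A-module. Let n ≥ 1 and let φ : Aⁿ → Aⁿ be an injective A-linear map with cokernel F and quotient map π : Aⁿ → F. Define Φ : Hom_A(Aⁿ, A) → Hom_A(F, K/A) as follows: for a linear form g on the source copy of Aⁿ and x ∈ F, choose a lift x̃ ∈ Aⁿ of x, a nonzerodivisor a ∈ A, and y ∈ Aⁿ with φ(y) = a·x̃, and set Φ(g)(x) = class of g(y)/a in K/A. Then Φ is a well-defined surjective A-linear map, the transpose map φᵀ : Hom_A(Aⁿ, A) → Hom_A(Aⁿ, A) (precomposition with φ) is injective, and the kernel of Φ equals the image of φᵀ; i.e. the sequence 0 → (Aⁿ)∨ → (Aⁿ)∨ → Hom_A(F, K/A) → 0 is exact. -/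
/-!
Write `K` for the total quotient ring. Every element of the cokernel of `φ` is killed by the
nonzerodivisor `det φ`, because `φ` composed with its adjugate is multiplication by `det φ`. As
`φ` is injective and nonzerodivisors act invertibly on `K`, every linear map from the source of
`φ` to `K` extends uniquely along `φ`. Thus a form `g` extends to a `K`-valued map `G` on the
target, and `Φ g` is the map induced by `G` modulo `A`: it vanishes iff `G` takes values in `A`,
that is, iff `g` extends to a form on the target. Conversely, a map from the cokernel to `K/A`
lifts to a `K`-valued map `k` on the free target, `k ∘ φ` takes values in `A`, and `k` is its
extension.
-/

open LinearMap nonZeroDivisors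

section TorsionCokernel

variable {A M N ι : Type*} [CommRing A] [AddCommGroup M] [Module A M] [AddCommGroup N]
  [Module A N] {φ : M →ₗ[A] N}

theorem det_toMatrix_mem_nonZeroDivisors_of_injective [Fintype ι] [DecidableEq ι]
    (b : Module.Basis ι A M) (c : Module.Basis ι A N) (hφ : Function.Injective φ) :
    (toMatrix b c φ).det ∈ A⁰ := by
  rw [← Matrix.nonsingular_iff_det_mem_nonZeroDivisors, ← Matrix.linearIndependent_col_iff,
    ← Matrix.mulVec_injective_iff]
  have mulVec_comp : (toMatrix b c φ).mulVec ∘ b.equivFun = c.equivFun ∘ φ :=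
    funext (toMatrix_mulVec_repr b c φ)
  refine Function.Injective.of_comp_right (g := b.equivFun) ?_ b.equivFun.surjective
  rw [mulVec_comp]
  exact c.equivFun.injective.comp hφ

theorem comp_toLin_adjugate_toMatrix [Fintype ι] [DecidableEq ι]
    (b : Module.Basis ι A M) (c : Module.Basis ι A N) :
    φ ∘ₗ Matrix.toLin c b (toMatrix b c φ).adjugate = (toMatrix b c φ).det • LinearMap.id := by
  apply (toMatrix c c).injective
  rw [toMatrix_comp c b c, toMatrix_toLin, Matrix.mul_adjugate, map_smul, toMatrix_id]

theorem isTorsion_quotient_range_of_injective [Finite ι]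
    (b : Module.Basis ι A M) (c : Module.Basis ι A N) (hφ : Function.Injective φ) :
    Module.IsTorsion A (N ⧸ range φ) := by
  classical
  have := Fintype.ofFinite ι
  intro x
  obtain ⟨x, rfl⟩ := Submodule.Quotient.mk_surjective _ x
  refine ⟨⟨_, det_toMatrix_mem_nonZeroDivisors_of_injective b c hφ⟩, ?_⟩
  rw [Submonoid.mk_smul, ← Submodule.Quotient.mk_smul, Submodule.Quotient.mk_eq_zero]
  exact ⟨_, LinearMap.congr_fun (comp_toLin_adjugate_toMatrix b c) x⟩

end TorsionCokernel

section Extension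

variable {A M N Q : Type*} [CommRing A] {S : Submonoid A} [AddCommGroup M] [Module A M]
  [AddCommGroup N] [Module A N] [AddCommGroup Q] [Module A Q] {φ : M →ₗ[A] N}

theorem exists_map_eq_smul_of_isTorsion' (hcoker : Module.IsTorsion' (N ⧸ range φ) S) (x : N) :
    ∃ (a : S) (y : M), φ y = a • x := by
  obtain ⟨a, ha⟩ := hcoker (x := Submodule.Quotient.mk x)
  rw [← Submodule.Quotient.mk_smul, Submodule.Quotient.mk_eq_zero] at ha
  exact ⟨a, ha⟩

theorem isLocalizedModule_mkLinearMap_comp (hφ : Function.Injective φ)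
    (hcoker : Module.IsTorsion' (N ⧸ range φ) S) :
    IsLocalizedModule S (LocalizedModule.mkLinearMap S N ∘ₗ φ) where
  map_units := IsLocalizedModule.map_units (LocalizedModule.mkLinearMap S N)
  surj z := by
    obtain ⟨⟨x, s⟩, hz⟩ := IsLocalizedModule.surj S (LocalizedModule.mkLinearMap S N) z
    obtain ⟨a, y, hy⟩ := exists_map_eq_smul_of_isTorsion' hcoker x
    refine ⟨(y, a * s), ?_⟩
    rw [mul_smul, hz, comp_apply, hy, map_smul_of_tower]
  exists_of_eq {x₁ x₂} h := by
    obtain ⟨s, hs⟩ :=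
      IsLocalizedModule.exists_of_eq (S := S) (f := LocalizedModule.mkLinearMap S N) h
    exact ⟨s, hφ (by simpa only [map_smul_of_tower] using hs)⟩

theorem smul_injective_of_isUnit (hQ : ∀ s : S, IsUnit (algebraMap A (Module.End A Q) s)) (s : S) :
    Function.Injective (s • · : Q → Q) :=
  ((Module.End.isUnit_iff _).mp (hQ s)).injective

theorem lcomp_bijective_of_isTorsion' (hφ : Function.Injective φ)
    (hcoker : Module.IsTorsion' (N ⧸ range φ) S)
    (hQ : ∀ s : S, IsUnit (algebraMap A (Module.End A Q) s)) :
    Function.Bijective (lcomp A Q φ) := by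
  constructor
  · intro k l hkl
    ext x
    obtain ⟨a, y, hy⟩ := exists_map_eq_smul_of_isTorsion' hcoker x
    apply smul_injective_of_isUnit hQ a
    simpa only [lcomp_apply, hy, map_smul_of_tower] using LinearMap.congr_fun hkl y
  · intro g
    have := isLocalizedModule_mkLinearMap_comp hφ hcoker
    exact ⟨IsLocalizedModule.lift S (LocalizedModule.mkLinearMap S N ∘ₗ φ) g hQ ∘ₗ
      LocalizedModule.mkLinearMap S N, IsLocalizedModule.lift_comp S _ g hQ⟩

end Extension

section HomCoker

variable {A M N P Q : Type*} [CommRing A] [AddCommGroup M] [Module A M] [AddCommGroup N]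
  [Module A N] [AddCommGroup P] [Module A P] [AddCommGroup Q] [Module A Q] {φ : M →ₗ[A] N}
  {i : P →ₗ[A] Q}

theorem lcomp_injective_of_bijective_of_injective
    (hbij : Function.Bijective (lcomp A Q φ)) (hi : Function.Injective i) :
    Function.Injective (lcomp A P φ) := by
  intro h h' heq
  have comp_eq : i ∘ₗ h = i ∘ₗ h' := hbij.injective (congrArg (i ∘ₗ ·) heq)
  exact (cancel_left hi).mp comp_eq

/-- When every map `M → Q` extends uniquely along `φ : M → N`, the extension of `f : M → Q`
to `N`. -/
noncomputable def extendAlong (hbij : Function.Bijective (lcomp A Q φ)) :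
    (M →ₗ[A] Q) ≃ₗ[A] (N →ₗ[A] Q) :=
  (LinearEquiv.ofBijective (lcomp A Q φ) hbij).symm

variable (hbij : Function.Bijective (lcomp A Q φ))

theorem extendAlong_comp (f : M →ₗ[A] Q) : extendAlong hbij f ∘ₗ φ = f :=
  (LinearEquiv.ofBijective (lcomp A Q φ) hbij).apply_symm_apply f

theorem extendAlong_eq_iff {f : M →ₗ[A] Q} {k : N →ₗ[A] Q} :
    extendAlong hbij f = k ↔ f = k ∘ₗ φ :=
  LinearEquiv.symm_apply_eq _

theorem extendAlong_apply_map (f : M →ₗ[A] Q) (y : M) : extendAlong hbij f (φ y) = f y :=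
  LinearMap.congr_fun (extendAlong_comp hbij f) y

variable (i) in
/-- The map `Φ : Hom(M, P) → Hom(coker φ, Q/P)`, sending `g` to the map induced by the extension
of `i ∘ g` to `N`. The case of interest is `P = A`, `Q` the total quotient ring of `A`. -/
noncomputable def homCokerMap :
    (M →ₗ[A] P) →ₗ[A] ((N ⧸ range φ) →ₗ[A] (Q ⧸ range i)) where
  toFun g := (range φ).mapQ (range i) (extendAlong hbij (i ∘ₗ g)) <| by
    rintro _ ⟨y, rfl⟩
    exact ⟨g y, (extendAlong_apply_map hbij (i ∘ₗ g) y).symm⟩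
  map_add' g h := by
    ext x
    simp [comp_add]
  map_smul' r g := by
    ext x
    simp [comp_smul]

theorem homCokerMap_mk (g : M →ₗ[A] P) (x : N) :
    homCokerMap i hbij g (Submodule.Quotient.mk x) =
      Submodule.Quotient.mk (extendAlong hbij (i ∘ₗ g) x) :=
  rfl

theorem homCokerMap_mk_of_map_eq_smul {S : Submonoid A}
    (hQ : ∀ s : S, IsUnit (algebraMap A (Module.End A Q) s)) {g : M →ₗ[A] P} {x : N} {a : S}
    {y : M} {q : Q} (hy : φ y = a • x) (hq : i (g y) = a • q) :
    homCokerMap i hbij g (Submodule.Quotient.mk x) = Submodule.Quotient.mk q := by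
  rw [homCokerMap_mk]
  congr 1
  apply smul_injective_of_isUnit hQ a
  calc a • extendAlong hbij (i ∘ₗ g) x = extendAlong hbij (i ∘ₗ g) (φ y) := by
        rw [hy, map_smul_of_tower]
    _ = i (g y) := extendAlong_apply_map hbij _ y
    _ = a • q := hq

theorem ker_homCokerMap (hi : Function.Injective i) :
    ker (homCokerMap i hbij) = range (lcomp A P φ) := by
  ext g
  constructor
  · intro hg
    have mem_range (x : N) : extendAlong hbij (i ∘ₗ g) x ∈ range i := by
      rw [← Submodule.Quotient.mk_eq_zero, ← homCokerMap_mk, mem_ker.mp hg, LinearMap.zero_apply]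
    refine ⟨codRestrictOfInjective _ i hi mem_range, (cancel_left hi).mp ?_⟩
    rw [lcomp_apply', ← comp_assoc, codRestrictOfInjective_comp, extendAlong_comp]
  · rintro ⟨h, rfl⟩
    have extension_eq : extendAlong hbij (i ∘ₗ h ∘ₗ φ) = i ∘ₗ h := (extendAlong_eq_iff hbij).mpr rfl
    ext x
    change homCokerMap i hbij (h ∘ₗ φ) (Submodule.Quotient.mk x) = 0
    rw [homCokerMap_mk, extension_eq, Submodule.Quotient.mk_eq_zero]
    exact ⟨h x, rfl⟩

theorem homCokerMap_surjective [Module.Projective A N] (hi : Function.Injective i) :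
    Function.Surjective (homCokerMap i hbij) := by
  intro f
  obtain ⟨k, hk⟩ := Module.projective_lifting_property (range i).mkQ (f ∘ₗ (range φ).mkQ)
    (range i).mkQ_surjective
  have mk_apply (x : N) : Submodule.Quotient.mk (k x) = f (Submodule.Quotient.mk x) :=
    LinearMap.congr_fun hk x
  have mem_range (y : M) : (k ∘ₗ φ) y ∈ range i := by
    rw [← Submodule.Quotient.mk_eq_zero, comp_apply, mk_apply,
      (Submodule.Quotient.mk_eq_zero _).mpr (mem_range_self φ y), map_zero]
  let g : M →ₗ[A] P := codRestrictOfInjective (k ∘ₗ φ) i hi mem_range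
  have extension_eq : extendAlong hbij (i ∘ₗ g) = k :=
    (extendAlong_eq_iff hbij).mpr (codRestrictOfInjective_comp _ i hi mem_range)
  refine ⟨g, ?_⟩
  ext x
  change homCokerMap i hbij g (Submodule.Quotient.mk x) = f (Submodule.Quotient.mk x)
  rw [homCokerMap_mk, extension_eq, mk_apply]

end HomCoker

theorem statement3_general {A M N P Q : Type*} [CommRing A] {S : Submonoid A} [AddCommGroup M]
    [Module A M] [AddCommGroup N] [Module A N] [Module.Projective A N] [AddCommGroup P]
    [Module A P] [AddCommGroup Q] [Module A Q] {φ : M →ₗ[A] N} (hφ : Function.Injective φ)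
    (hcoker : Module.IsTorsion' (N ⧸ range φ) S) {i : P →ₗ[A] Q} (hi : Function.Injective i)
    (hQ : ∀ s : S, IsUnit (algebraMap A (Module.End A Q) s)) :
    ∃ Φ : (M →ₗ[A] P) →ₗ[A] ((N ⧸ range φ) →ₗ[A] (Q ⧸ range i)),
      (∀ (g : M →ₗ[A] P) (x : N) (a : S) (y : M) (q : Q), φ y = a • x → i (g y) = a • q →
        Φ g (Submodule.Quotient.mk x) = Submodule.Quotient.mk q) ∧
      Function.Surjective Φ ∧
      Function.Injective (lcomp A P φ) ∧
      ker Φ = range (lcomp A P φ) := by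
  have hbij : Function.Bijective (lcomp A Q φ) := lcomp_bijective_of_isTorsion' hφ hcoker hQ
  exact ⟨homCokerMap i hbij, fun _ _ _ _ _ ↦ homCokerMap_mk_of_map_eq_smul hbij hQ,
    homCokerMap_surjective hbij hi, lcomp_injective_of_bijective_of_injective hbij hi,
    ker_homCokerMap hbij hi⟩

/-- Let `A` be a commutative ring with total quotient ring `K`, and
`K/A = coker (A → K)`.  Let `φ : Aⁿ → Aⁿ` (`n ≥ 1`) be an injective `A`-linear map with
cokernel `F`.  There is a (well-defined) `A`-linear map `Φ : (Aⁿ)∨ → Hom_A(F, K/A)`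
with `Φ g (π xt) = class of g(y)/a` whenever `a` is a nonzerodivisor and `φ y = a • xt`;
moreover `Φ` is surjective, the transpose `φᵀ : (Aⁿ)∨ → (Aⁿ)∨` is injective, and
`ker Φ = range φᵀ`, i.e. `0 → (Aⁿ)∨ → (Aⁿ)∨ → Hom_A(F, K/A) → 0` is exact. -/
theorem statement3 {A : Type*} [CommRing A] (n : ℕ) (hn : 1 ≤ n)
    (φ : (Fin n → A) →ₗ[A] (Fin n → A)) (hφ : Function.Injective φ) :
    ∃ Φ : ((Fin n → A) →ₗ[A] A) →ₗ[A]
        (((Fin n → A) ⧸ LinearMap.range φ) →ₗ[A] KModA A),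
      (∀ (g : (Fin n → A) →ₗ[A] A) (xt : Fin n → A) (a : A) (ha : a ∈ nonZeroDivisors A)
          (y : Fin n → A), φ y = a • xt →
          Φ g (Submodule.Quotient.mk xt) =
            Submodule.Quotient.mk
              (IsLocalization.mk' (TotalQuotientRing A) (g y) (⟨a, ha⟩ : nonZeroDivisors A))) ∧
      Function.Surjective Φ ∧
      Function.Injective (Module.Dual.transpose (R := A) φ) ∧
      LinearMap.ker Φ = LinearMap.range (Module.Dual.transpose (R := A) φ) := by
  let i := Algebra.linearMap A (TotalQuotientRing A)
  obtain ⟨Φ, hΦ, hexact⟩ := statement3_general hφ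
    (isTorsion_quotient_range_of_injective (Pi.basisFun A (Fin n)) (Pi.basisFun A (Fin n)) hφ)
    (i := i) (IsLocalization.injective _ le_rfl) (IsLocalizedModule.map_units i)
  refine ⟨Φ, fun g xt a ha y hy ↦ hΦ g xt ⟨a, ha⟩ y _ hy ?_, hexact⟩
  exact ((Algebra.smul_def _ _).trans (IsLocalization.mk'_spec' _ (g y) ⟨a, ha⟩)).symm
end

section
/- Let k be a field, A = k[x,y] the polynomial ring in two variables, K = Frac(A) its field of fractions, and M = A/(x,y) the residue field of the origin viewed as an A-module. Then Hom_A(M, K/A) = 0, where K/A is the quotient of K by A as an A-module. -/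
/-! If `x` is regular on `V` and `y` is regular on `N / xN`, then `V / N` has no nonzero element
killed by both `x` and `y`: when `x z` and `y z` lie in `N`, we have `y (x z) = x (y z) ∈ x N`, so
`x z ∈ x N`, and cancelling `x` in `V` gives `z ∈ N`. Hence every homomorphism to `V / N` from a
module killed by `x` and `y` is zero. For `V = K = Frac A` and `N = A` this applies to every weakly
regular sequence `x, y` in `A`, in particular to two distinct variables of a polynomial ring. -/

open RingTheory.Sequence
open scoped Pointwise

section RegularPair

variable {A V : Type*} [CommRing A] [AddCommGroup V] [Module A V] {N : Submodule A V} {x y : A}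

theorem mem_of_smul_mem_of_smul_mem (hx : IsSMulRegular V x)
    (hy : IsSMulRegular (QuotSMulTop x N) y) {z : V} (hxz : x • z ∈ N) (hyz : y • z ∈ N) :
    z ∈ N := by
  have hyxz : y • (⟨x • z, hxz⟩ : N) ∈ x • (⊤ : Submodule A N) := by
    rw [show y • (⟨x • z, hxz⟩ : N) = x • ⟨y • z, hyz⟩ from Subtype.ext (smul_comm y x z)]
    exact Submodule.smul_mem_pointwise_smul _ x ⊤ Submodule.mem_top
  obtain ⟨n, -, hn⟩ := mem_of_isSMulRegular_quotient_of_smul_mem hy hyxz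
  have hnz : (n : V) = z := hx (congrArg Subtype.val hn)
  exact hnz ▸ n.2

theorem subsingleton_linearMap_quotient_of_mem_annihilator {M : Type*} [AddCommGroup M]
    [Module A M] (hx : IsSMulRegular V x) (hy : IsSMulRegular (QuotSMulTop x N) y)
    (hxM : x ∈ Module.annihilator A M) (hyM : y ∈ Module.annihilator A M) :
    Subsingleton (M →ₗ[A] V ⧸ N) := by
  refine subsingleton_of_forall_eq 0 fun f ↦ LinearMap.ext fun m ↦ ?_
  obtain ⟨z, hz⟩ := N.mkQ_surjective (f m)
  have smul_mem {a : A} (ha : a ∈ Module.annihilator A M) : a • z ∈ N := by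
    rw [← Submodule.Quotient.mk_eq_zero, ← N.mkQ_apply, map_smul, hz, ← map_smul,
      Module.mem_annihilator.mp ha m, map_zero]
  rw [← hz, LinearMap.zero_apply, N.mkQ_apply, Submodule.Quotient.mk_eq_zero]
  exact mem_of_smul_mem_of_smul_mem hx hy (smul_mem hxM) (smul_mem hyM)

end RegularPair

theorem isSMulRegular_of_isFractionRing {A : Type*} (K : Type*) [CommRing A] [CommRing K]
    [Algebra A K] [IsFractionRing A K] {x : A} (hx : IsSMulRegular A x) : IsSMulRegular K x := by
  have hx_mem : x ∈ nonZeroDivisors A :=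
    (isLeftRegular_iff_isRegular.mp (isLeftRegular_iff.mpr hx)).mem_nonZeroDivisors
  have hx_unit : IsUnit (algebraMap A K x) := IsLocalization.map_units K ⟨x, hx_mem⟩
  exact (isSMulRegular_map (algebraMap A K) (algebraMap_smul K x)).mp (hx_unit.isSMulRegular K)

theorem statement4_general {A K M : Type*} [CommRing A] [CommRing K] [Algebra A K]
    [IsFractionRing A K] [AddCommGroup M] [Module A M] {x y : A} (hxy : IsWeaklyRegular A [x, y])
    (hxM : x ∈ Module.annihilator A M) (hyM : y ∈ Module.annihilator A M) :
    Subsingleton (M →ₗ[A] K ⧸ LinearMap.range (Algebra.linearMap A K)) := by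
  rw [isWeaklyRegular_cons_iff, isWeaklyRegular_singleton_iff] at hxy
  obtain ⟨hx, hy⟩ := hxy
  let e := LinearEquiv.ofInjective (Algebra.linearMap A K) (IsFractionRing.injective A K)
  exact subsingleton_linearMap_quotient_of_mem_annihilator (isSMulRegular_of_isFractionRing K hx)
    (((QuotSMulTop.congr x e).isSMulRegular_congr y).mp hy) hxM hyM

section MvPolynomial

open MvPolynomial

variable {σ R : Type*} {i j : σ}

theorem mvPolynomial_X_dvd_iff_coeff_eq_zero [CommSemiring R] {p : MvPolynomial σ R} :
    X i ∣ p ↔ ∀ m : σ →₀ ℕ, m i = 0 → coeff m p = 0 := by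
  rw [X_dvd_iff_modMonomial_eq_zero, MvPolynomial.ext_iff]
  refine forall_congr' fun m ↦ ?_
  have single_le_iff : Finsupp.single i 1 ≤ m ↔ m i ≠ 0 := by
    rw [Finsupp.single_le_iff, Nat.one_le_iff_ne_zero]
  by_cases hm : m i = 0
  · rw [coeff_modMonomial_of_not_le _ (single_le_iff.not.mpr (not_not.mpr hm))]
    simp [hm]
  · rw [coeff_modMonomial_of_le _ (single_le_iff.mpr hm)]
    simp [hm]

theorem mvPolynomial_X_dvd_of_dvd_X_mul [CommSemiring R] (hij : i ≠ j) {p : MvPolynomial σ R}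
    (h : X i ∣ X j * p) : X i ∣ p := by
  rw [mvPolynomial_X_dvd_iff_coeff_eq_zero] at h ⊢
  intro m hm
  rw [← coeff_X_mul m j p]
  exact h _ (by simp [hm, hij])

theorem isWeaklyRegular_pair_mvPolynomial_X [CommRing R] (hij : i ≠ j) :
    IsWeaklyRegular (MvPolynomial σ R) [(X i : MvPolynomial σ R), X j] := by
  rw [isWeaklyRegular_cons_iff, isWeaklyRegular_singleton_iff]
  refine ⟨isRegular_X.left.isSMulRegular, ?_⟩
  rw [isSMulRegular_quotient_iff_mem_of_smul_mem]
  rintro p ⟨q, -, hq⟩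
  obtain ⟨r, rfl⟩ := mvPolynomial_X_dvd_of_dvd_X_mul hij ⟨q, hq.symm⟩
  exact Submodule.smul_mem_pointwise_smul r (X i) ⊤ Submodule.mem_top

end MvPolynomial

/-- Let `k` be a field, `A = k[x,y]`, `K = Frac(A)` and
`M = A/(x,y)`.  Then `Hom_A(M, K/A) = 0`, where `K/A` is the quotient of `K` by (the
image of) `A` as an `A`-module. -/
theorem statement4 (k : Type*) [Field k] :
    Subsingleton
      ((MvPolynomial (Fin 2) k ⧸
          Ideal.span {(MvPolynomial.X 0 : MvPolynomial (Fin 2) k), MvPolynomial.X 1})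
        →ₗ[MvPolynomial (Fin 2) k]
        (FractionRing (MvPolynomial (Fin 2) k) ⧸
          LinearMap.range (Algebra.linearMap (MvPolynomial (Fin 2) k)
            (FractionRing (MvPolynomial (Fin 2) k))))) := by
  apply statement4_general (isWeaklyRegular_pair_mvPolynomial_X zero_ne_one) <;>
    rw [Ideal.annihilator_quotient]
  exacts [Ideal.subset_span (Set.mem_insert _ _), Ideal.subset_span (Set.mem_insert_of_mem _ rfl)]
end

section
/- Let k be a field, A = k[x,y] the polynomial ring in two variables, and M = A/(x,y). Then for no n ≥ 1 does there exist an exact sequence of A-modules Aⁿ → Aⁿ → M → 0 (i.e. M admits no presentation by equally many generators and relations; M is a torsion module that does not have few relations). -/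
/-!
If `Aⁿ → Aⁿ → N → 0` is exact and `a` kills `N`, then multiplication by `a` on `Aⁿ` factors through
the presentation map `φ`, so `det φ` divides `aⁿ`. When `N` is killed by both terms of a regular
sequence `a, b`, the powers `aⁿ` and `bⁿ` have only units as common divisors. Hence `det φ` is a
unit, `φ` is surjective, and `N = 0`.
-/

open RingTheory.Sequence

section RegularPair

theorem dvd_of_dvd_pow_mul {M : Type*} [CommMonoid M] {a b : M} (hb : ∀ c, a ∣ b * c → a ∣ c)
    (n : ℕ) {c : M} (h : a ∣ b ^ n * c) : a ∣ c := by
  induction n with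
  | zero => simpa using h
  | succ n ih => exact ih (hb _ (by rwa [← mul_assoc, ← pow_succ']))

variable {A : Type*} [CommRing A] {a b : A}

theorem isWeaklyRegular_pair_iff :
    IsWeaklyRegular A [a, b] ↔ IsSMulRegular A a ∧ ∀ c, a ∣ b * c → a ∣ c := by
  rw [isWeaklyRegular_cons_iff, isWeaklyRegular_singleton_iff,
    isSMulRegular_quotient_iff_mem_of_smul_mem]
  simp only [Submodule.mem_smul_pointwise_iff_exists, Submodule.mem_top, true_and, smul_eq_mul,
    dvd_def, eq_comm]

theorem isRegular_pair_iff :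
    RingTheory.Sequence.IsRegular A [a, b] ↔
      IsWeaklyRegular A [a, b] ∧ Ideal.span {a, b} ≠ ⊤ := by
  rw [isRegular_iff, smul_eq_mul, Ideal.mul_top, Ideal.ofList_cons, Ideal.ofList_singleton,
    ← Ideal.span_insert, ne_comm]

theorem pow_dvd_of_pow_dvd_pow_mul (hreg : IsWeaklyRegular A [a, b]) (m n : ℕ) {c : A}
    (h : a ^ m ∣ b ^ n * c) : a ^ m ∣ c := by
  obtain ⟨ha, hb⟩ := isWeaklyRegular_pair_iff.mp hreg
  induction m generalizing c with
  | zero => simp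
  | succ m ih =>
    obtain ⟨c, rfl⟩ : a ∣ c := dvd_of_dvd_pow_mul hb n ((dvd_pow_self a m.succ_ne_zero).trans h)
    obtain ⟨e, he⟩ := h
    have hdvd : a ^ m ∣ b ^ n * c := ⟨e, ha (by simp only [smul_eq_mul]; linear_combination he)⟩
    rw [pow_succ']
    exact mul_dvd_mul_left a (ih hdvd)

theorem isRelPrime_pow_pow_of_isWeaklyRegular (hreg : IsWeaklyRegular A [a, b]) (m n : ℕ) :
    IsRelPrime (a ^ m) (b ^ n) := by
  rintro d ⟨e, he⟩ ⟨f, hf⟩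
  have hdvd : a ^ m ∣ b ^ n * e := ⟨f, by rw [he, hf]; ring⟩
  obtain ⟨g, rfl⟩ := pow_dvd_of_pow_dvd_pow_mul hreg m n hdvd
  have ha : IsSMulRegular A (a ^ m) := (isWeaklyRegular_pair_iff.mp hreg).1.pow m
  exact .of_mul_eq_one g (ha (by simp only [smul_eq_mul]; linear_combination -he))

end RegularPair

section SquarePresentation

variable {A F N : Type*} [CommRing A] [AddCommGroup F] [Module A F] [Module.Free A F]
  [AddCommGroup N] [Module A N]

theorem det_dvd_pow_finrank_of_smul_mem_range (φ : F →ₗ[A] F) {a : A}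
    (h : ∀ v, a • v ∈ LinearMap.range φ) : LinearMap.det φ ∣ a ^ Module.finrank A F := by
  obtain ⟨χ, hχ⟩ := Module.projective_lifting_property φ.rangeRestrict
    ((a • LinearMap.id).codRestrict (LinearMap.range φ) h) φ.surjective_rangeRestrict
  have hfactor : φ ∘ₗ χ = a • LinearMap.id :=
    congrArg ((LinearMap.range φ).subtype ∘ₗ ·) hχ
  refine ⟨LinearMap.det χ, ?_⟩
  rw [← LinearMap.det_comp, hfactor, LinearMap.det_smul, LinearMap.det_id, mul_one]

variable [Module.Finite A F]

theorem subsingleton_of_exact_of_isWeaklyRegular {a b : A} (hreg : IsWeaklyRegular A [a, b])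
    (ha : a ∈ Module.annihilator A N) (hb : b ∈ Module.annihilator A N)
    {φ : F →ₗ[A] F} {ψ : F →ₗ[A] N} (hexact : Function.Exact φ ψ) (hψ : Function.Surjective ψ) :
    Subsingleton N := by
  have det_dvd {c : A} (hc : c ∈ Module.annihilator A N) :
      LinearMap.det φ ∣ c ^ Module.finrank A F :=
    det_dvd_pow_finrank_of_smul_mem_range φ fun v ↦
      (hexact _).mp (by rw [map_smul, Module.mem_annihilator.mp hc])
  have hdet : IsUnit (LinearMap.det φ) :=
    isRelPrime_pow_pow_of_isWeaklyRegular hreg _ _ (det_dvd ha) (det_dvd hb)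
  have hφ : Function.Surjective φ :=
    ((Module.End.isUnit_iff φ).mp ((LinearMap.isUnit_iff_isUnit_det φ).mpr hdet)).2
  refine subsingleton_of_forall_eq 0 fun y ↦ ?_
  obtain ⟨v, rfl⟩ := hψ y
  exact (hexact v).mpr (hφ v)

end SquarePresentation

section Variables

open MvPolynomial

variable {σ R : Type*}

theorem X_dvd_iff_coeff_eq_zero [CommSemiring R] {i : σ} {p : MvPolynomial σ R} :
    X i ∣ p ↔ ∀ m : σ →₀ ℕ, m i = 0 → coeff m p = 0 := by
  rw [X_dvd_iff_modMonomial_eq_zero, MvPolynomial.ext_iff]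
  refine forall_congr' fun m ↦ ?_
  by_cases hm : m i = 0
  · have hle : ¬Finsupp.single i 1 ≤ m := by simp [hm]
    simp [hm, coeff_modMonomial_of_not_le p hle]
  · have hle : Finsupp.single i 1 ≤ m := by simpa [Nat.one_le_iff_ne_zero] using hm
    simp [hm, coeff_modMonomial_of_le p hle]

variable [CommRing R] {i j : σ}

theorem isWeaklyRegular_X_X (hij : i ≠ j) :
    IsWeaklyRegular (MvPolynomial σ R) [(X i : MvPolynomial σ R), X j] := by
  refine isWeaklyRegular_pair_iff.mpr ⟨(isRegular_X (R := R) (n := i)).left, fun c h ↦ ?_⟩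
  rw [X_dvd_iff_coeff_eq_zero] at h ⊢
  intro m hm
  rw [← coeff_X_mul m j c]
  exact h _ (by simp [hm, hij.symm])

theorem isRegular_X_X [Nontrivial R] (hij : i ≠ j) :
    RingTheory.Sequence.IsRegular (MvPolynomial σ R) [(X i : MvPolynomial σ R), X j] := by
  have hle : Ideal.span {X i, X j} ≤ RingHom.ker (constantCoeff (σ := σ) (R := R)) := by
    simp [Ideal.span_le, Set.insert_subset_iff]
  exact isRegular_pair_iff.mpr
    ⟨isWeaklyRegular_X_X hij, ne_top_of_le_ne_top (RingHom.ker_ne_top _) hle⟩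

end Variables

theorem statement5_general {A F : Type*} [CommRing A] [AddCommGroup F] [Module A F]
    [Module.Free A F] [Module.Finite A F] {a b : A}
    (hreg : RingTheory.Sequence.IsRegular A [a, b])
    (φ : F →ₗ[A] F) (ψ : F →ₗ[A] A ⧸ Ideal.span {a, b}) :
    ¬ (Function.Surjective ψ ∧ LinearMap.ker ψ = LinearMap.range φ) := by
  rintro ⟨hψ, hker⟩
  obtain ⟨hweak, hne_top⟩ := isRegular_pair_iff.mp hreg
  have hmem {c : A} (hc : c ∈ ({a, b} : Set A)) :
      c ∈ Module.annihilator A (A ⧸ Ideal.span {a, b}) := by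
    rw [Ideal.annihilator_quotient]
    exact Ideal.subset_span hc
  have hsub : Subsingleton (A ⧸ Ideal.span {a, b}) :=
    subsingleton_of_exact_of_isWeaklyRegular hweak (hmem (.inl rfl)) (hmem (.inr rfl))
      (LinearMap.exact_iff.mpr hker) hψ
  exact hne_top (Ideal.Quotient.subsingleton_iff.mp hsub)

/-- Let `k` be a field, `A = k[x,y]` and `M = A/(x,y)`.  Then for no
`n ≥ 1` does there exist an exact sequence of `A`-modules `Aⁿ → Aⁿ → M → 0`:
`M` admits no presentation by equally many generators and relations. -/
theorem statement5 (k : Type*) [Field k] (n : ℕ) (hn : 1 ≤ n)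
    (φ : (Fin n → MvPolynomial (Fin 2) k) →ₗ[MvPolynomial (Fin 2) k]
      (Fin n → MvPolynomial (Fin 2) k))
    (ψ : (Fin n → MvPolynomial (Fin 2) k) →ₗ[MvPolynomial (Fin 2) k]
      (MvPolynomial (Fin 2) k ⧸
        Ideal.span {(MvPolynomial.X 0 : MvPolynomial (Fin 2) k), MvPolynomial.X 1})) :
    ¬ (Function.Surjective ψ ∧ LinearMap.ker ψ = LinearMap.range φ) :=
  statement5_general (isRegular_X_X (by decide)) φ ψ
end

section
/- Let A be a commutative ring and let f ∈ A[a, b, c] be a polynomial in three variables, viewed as a polynomial function on sl₂ via the matrix M(a,b,c) = [[a, b], [c, −a]]. Then the following are equivalent: (1) for every commutative A-algebra R, every g ∈ SL₂(R) and every (a₀, b₀, c₀) ∈ R³, writing g·M(a₀,b₀,c₀)·g⁻¹ = M(a₁,b₁,c₁), one has f(a₁,b₁,c₁) = f(a₀,b₀,c₀); (2) f lies in the A-subalgebra A[a² + bc] of A[a,b,c] generated by a² + bc. In other words, the ring of invariants A[sl₂]^{SL₂} equals A[det], where det(a,b,c) = −a² − bc. -/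
open MvPolynomial

universe u

/-!
The companion matrices `[[0, 1], [q, 0]]` form a section of `sl₂ → 𝔸¹`, `(a, b, c) ↦ a² + bc`.
Wherever `b = s²` with `s` a unit, the lower triangular matrix `[[s, 0], [-a s⁻¹, s⁻¹]]` conjugates
`[[0, 1], [a² + bc, 0]]` to `[[a, b], [c, -a]]`, so an invariant `f` satisfies
`f(a, b, c) = f(0, 1, a² + bc)` there. Passing to a localization, this persists when `s` is only a
non-zero-divisor, in particular at the point `(X₀², X₁², X₂²)`. As `f ↦ f(X₀², X₁², X₂²)` is
injective, `f = f(0, 1, X₀² + X₁X₂)`, which is a polynomial in `X₀² + X₁X₂`.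
-/

section Conjugation

variable {R : Type*} [CommRing R]

/-- The traceless matrix `M(a, b, c) = [[a, b], [c, -a]]`, for `v = (a, b, c)`. -/
def sl2Matrix (v : Fin 3 → R) : Matrix (Fin 2) (Fin 2) R :=
  !![v 0, v 1; v 2, -(v 0)]

/-- The coordinates `(a, b, c)` of a traceless matrix `[[a, b], [c, -a]]`; on an arbitrary matrix
the lower right entry is ignored. -/
def sl2Coords (N : Matrix (Fin 2) (Fin 2) R) : Fin 3 → R :=
  ![N 0 0, N 0 1, N 1 0]

theorem trace_sl2Matrix (v : Fin 3 → R) : (sl2Matrix v).trace = 0 := by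
  simp [sl2Matrix, Matrix.trace_fin_two]

theorem det_sl2Matrix (v : Fin 3 → R) : (sl2Matrix v).det = -(v 0 ^ 2 + v 1 * v 2) := by
  rw [sl2Matrix, Matrix.det_fin_two_of]
  ring

theorem sl2Coords_sl2Matrix (v : Fin 3 → R) : sl2Coords (sl2Matrix v) = v := by
  ext i
  fin_cases i <;> rfl

theorem sl2Matrix_sl2Coords {N : Matrix (Fin 2) (Fin 2) R} (hN : N.trace = 0) :
    sl2Matrix (sl2Coords N) = N := by
  rw [Matrix.trace_fin_two] at hN
  ext i j
  fin_cases i <;> fin_cases j <;> simp [sl2Matrix, sl2Coords, eq_neg_of_add_eq_zero_right hN]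

/-- The conjugation action of `SL₂(R)` on `sl₂(R)`, in the coordinates `(a, b, c)`. -/
def conjCoords (g : Matrix.SpecialLinearGroup (Fin 2) R) (v : Fin 3 → R) : Fin 3 → R :=
  sl2Coords ((g : Matrix (Fin 2) (Fin 2) R) * sl2Matrix v *
    ((g⁻¹ : Matrix.SpecialLinearGroup (Fin 2) R) : Matrix (Fin 2) (Fin 2) R))

theorem sl2Matrix_conjCoords (g : Matrix.SpecialLinearGroup (Fin 2) R) (v : Fin 3 → R) :
    sl2Matrix (conjCoords g v) = (g : Matrix (Fin 2) (Fin 2) R) * sl2Matrix v *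
      ((g⁻¹ : Matrix.SpecialLinearGroup (Fin 2) R) : Matrix (Fin 2) (Fin 2) R) := by
  apply sl2Matrix_sl2Coords
  rw [Matrix.trace_mul_cycle, ← Matrix.SpecialLinearGroup.coe_mul, inv_mul_cancel,
    Matrix.SpecialLinearGroup.coe_one, one_mul, trace_sl2Matrix]

theorem conjCoords_sq_add_mul (g : Matrix.SpecialLinearGroup (Fin 2) R) (v : Fin 3 → R) :
    conjCoords g v 0 ^ 2 + conjCoords g v 1 * conjCoords g v 2 = v 0 ^ 2 + v 1 * v 2 := by
  rw [← neg_inj, ← det_sl2Matrix, ← det_sl2Matrix, sl2Matrix_conjCoords, Matrix.det_mul,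
    Matrix.det_mul, Matrix.SpecialLinearGroup.det_coe, Matrix.SpecialLinearGroup.det_coe,
    one_mul, mul_one]

theorem conjCoords_eq_of_mul_eq_mul {g : Matrix.SpecialLinearGroup (Fin 2) R} {v w : Fin 3 → R}
    (h : (g : Matrix (Fin 2) (Fin 2) R) * sl2Matrix v = sl2Matrix w * g) :
    conjCoords g v = w := by
  rw [conjCoords, h, mul_assoc, ← Matrix.SpecialLinearGroup.coe_mul, mul_inv_cancel,
    Matrix.SpecialLinearGroup.coe_one, mul_one, sl2Coords_sl2Matrix]

/-- The coordinates of the companion matrix `[[0, 1], [q, 0]]` of `T² - q`, which serves as the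
normal form of the traceless matrices of determinant `-q`. -/
def companionCoords (q : R) : Fin 3 → R :=
  ![0, 1, q]

theorem exists_conjCoords_companionCoords_eq {s : R} (hs : IsUnit s) {v : Fin 3 → R}
    (hv : v 1 = s ^ 2) :
    ∃ g : Matrix.SpecialLinearGroup (Fin 2) R,
      conjCoords g (companionCoords (v 0 ^ 2 + v 1 * v 2)) = v := by
  obtain ⟨t, hst⟩ := hs.exists_right_inv
  refine ⟨⟨!![s, 0; -(v 0 * t), t], by simp [Matrix.det_fin_two_of, hst]⟩,
    conjCoords_eq_of_mul_eq_mul ?_⟩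
  ext i j
  fin_cases i <;> fin_cases j <;>
    simp only [sl2Matrix, companionCoords, Matrix.mul_fin_two, Matrix.of_apply, Matrix.cons_val,
      Fin.zero_eta, Fin.mk_one, hv]
  · linear_combination (v 0 * s) * hst
  · linear_combination (-s) * hst
  · linear_combination (v 2 * s) * hst
  · ring

end Conjugation

section Invariants

variable {A : Type*} [CommRing A] {f : MvPolynomial (Fin 3) A}

/-- Invariance of the polynomial function `f` on `sl₂(R)` under conjugation by `SL₂(R)`, for a
single `A`-algebra `R`; the scheme-theoretic notion asks for this over all `R`. -/
def IsConjInvariantOver (R : Type*) [CommRing R] [Algebra A R] (f : MvPolynomial (Fin 3) A) :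
    Prop :=
  ∀ (g : Matrix.SpecialLinearGroup (Fin 2) R) (v : Fin 3 → R),
    aeval (conjCoords g v) f = aeval v f

theorem isConjInvariantOver_of_mem_adjoin (R : Type*) [CommRing R] [Algebra A R]
    (hf : f ∈ Algebra.adjoin A ({X 0 ^ 2 + X 1 * X 2} : Set (MvPolynomial (Fin 3) A))) :
    IsConjInvariantOver R f := by
  intro g v
  refine AlgHom.adjoin_le_equalizer (aeval (conjCoords g v)) (aeval v) ?_ hf
  rw [Set.eqOn_singleton]
  simpa only [map_add, map_mul, map_pow, aeval_X] using conjCoords_sq_add_mul g v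

theorem IsConjInvariantOver.aeval_eq_aeval_companionCoords {R : Type*} [CommRing R] [Algebra A R]
    (hf : IsConjInvariantOver R f) {s : R} (hs : IsUnit s) {v : Fin 3 → R} (hv : v 1 = s ^ 2) :
    aeval v f = aeval (companionCoords (v 0 ^ 2 + v 1 * v 2)) f := by
  obtain ⟨g, hg⟩ := exists_conjCoords_companionCoords_eq hs hv
  rw [← hf g (companionCoords _), hg]

theorem map_aeval_companionCoords {S T : Type*} [CommRing S] [CommRing T] [Algebra A S]
    [Algebra A T] (φ : S →ₐ[A] T) (q : S) (f : MvPolynomial (Fin 3) A) :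
    φ (aeval (companionCoords q) f) = aeval (companionCoords (φ q)) f := by
  rw [comp_aeval_apply]
  congr 2
  ext1 i
  fin_cases i <;> simp [companionCoords]

theorem aeval_eq_aeval_companionCoords_of_mem_nonZeroDivisors {R : Type*} [CommRing R]
    [Algebra A R] {s : R} (hs : s ∈ nonZeroDivisors R)
    (hf : IsConjInvariantOver (Localization.Away s) f) {v : Fin 3 → R} (hv : v 1 = s ^ 2) :
    aeval v f = aeval (companionCoords (v 0 ^ 2 + v 1 * v 2)) f := by
  let φ : R →ₐ[A] Localization.Away s := IsScalarTower.toAlgHom A R (Localization.Away s)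
  have hφ : Function.Injective φ :=
    IsLocalization.injective (Localization.Away s) (Submonoid.powers_le.mpr hs)
  have hφs : IsUnit (φ s) := IsLocalization.Away.algebraMap_isUnit s
  apply hφ
  calc φ (aeval v f)
      = aeval (fun i => φ (v i)) f := comp_aeval_apply v φ f
    _ = aeval (companionCoords (φ (v 0) ^ 2 + φ (v 1) * φ (v 2))) f :=
        hf.aeval_eq_aeval_companionCoords hφs (by rw [hv, map_pow])
    _ = φ (aeval (companionCoords (v 0 ^ 2 + v 1 * v 2)) f) := by
        rw [map_aeval_companionCoords, map_add, map_mul, map_pow]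

theorem aeval_companionCoords_mem_adjoin {S : Type*} [CommRing S] [Algebra A S] (q : S)
    (f : MvPolynomial (Fin 3) A) : aeval (companionCoords q) f ∈ Algebra.adjoin A {q} := by
  have hq : q ∈ Algebra.adjoin A {q} := Algebra.self_mem_adjoin_singleton A q
  exact map_aeval_companionCoords (Algebra.adjoin A {q}).val ⟨q, hq⟩ f ▸ Subtype.property _

theorem IsConjInvariantOver.eq_aeval_companionCoords
    (hf : IsConjInvariantOver (Localization.Away (X 1 : MvPolynomial (Fin 3) A)) f) :
    f = aeval (companionCoords (X 0 ^ 2 + X 1 * X 2)) f := by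
  have hX : (X 1 : MvPolynomial (Fin 3) A) ∈ nonZeroDivisors (MvPolynomial (Fin 3) A) :=
    isRegular_X.mem_nonZeroDivisors
  apply expand_injective two_pos
  calc expand 2 f
      = aeval (fun i => X i ^ 2) f := rfl
    _ = aeval (companionCoords ((X 0 ^ 2) ^ 2 + X 1 ^ 2 * X 2 ^ 2)) f :=
        aeval_eq_aeval_companionCoords_of_mem_nonZeroDivisors hX hf rfl
    _ = expand 2 (aeval (companionCoords (X 0 ^ 2 + X 1 * X 2)) f) := by
        simp only [map_aeval_companionCoords, map_add, map_mul, map_pow, expand_X]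

theorem IsConjInvariantOver.mem_adjoin
    (hf : IsConjInvariantOver (Localization.Away (X 1 : MvPolynomial (Fin 3) A)) f) :
    f ∈ Algebra.adjoin A ({X 0 ^ 2 + X 1 * X 2} : Set (MvPolynomial (Fin 3) A)) := by
  rw [hf.eq_aeval_companionCoords]
  exact aeval_companionCoords_mem_adjoin _ f

end Invariants

/-- Let `A` be a commutative ring and `f ∈ A[a, b, c]` (with
`a = X 0`, `b = X 1`, `c = X 2`), viewed as a polynomial function on `sl₂` via
`M(a,b,c) = [[a, b], [c, −a]]`.  Then `f` is invariant under the conjugation action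
of `SL₂(R)` for every commutative `A`-algebra `R` if and only if `f` lies in the
`A`-subalgebra generated by `a² + bc`; i.e. `A[sl₂]^{SL₂} = A[det]` with
`det = −a² − bc`. -/
theorem statement10 {A : Type u} [CommRing A] (f : MvPolynomial (Fin 3) A) :
    (∀ (R : Type u) [CommRing R] [Algebra A R]
        (g : Matrix.SpecialLinearGroup (Fin 2) R) (v : Fin 3 → R)
        (N : Matrix (Fin 2) (Fin 2) R),
        N = (g : Matrix (Fin 2) (Fin 2) R) * !![v 0, v 1; v 2, -(v 0)] *
              ((g⁻¹ : Matrix.SpecialLinearGroup (Fin 2) R) : Matrix (Fin 2) (Fin 2) R) →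
        aeval (![N 0 0, N 0 1, N 1 0] : Fin 3 → R) f = aeval v f) ↔
    f ∈ Algebra.adjoin A ({X 0 ^ 2 + X 1 * X 2} : Set (MvPolynomial (Fin 3) A)) := by
  constructor
  · intro hf
    exact IsConjInvariantOver.mem_adjoin fun g v => hf _ g v _ rfl
  · rintro hf R _ _ g v _ rfl
    exact isConjInvariantOver_of_mem_adjoin R hf g v
end

section
/- Let A be a commutative ring with 2-torsion ideal A[2] = {x ∈ A : 2x = 0}, and let f ∈ A[α, b, c]. For a commutative A-algebra R and g = [[p, q], [r, s]] ∈ SL₂(R) (so ps − qr = 1), define the adjoint action of g on R³ by (α, b, c) ↦ (α + 2qrα + 2qsc − 2prb, p²b − q²c − pqα, s²c − r²b + rsα) (this is the conjugation action on psl₂, whose coordinate ring has generators α = 2a, b, c). Then f is invariant under this action for every commutative A-algebra R and every g ∈ SL₂(R) if and only if f = h₀(α² + 4bc) + α·h₁(α² + 4bc) for some polynomials h₀ ∈ A[T] and h₁ ∈ A[T] all of whose coefficients lie in A[2]. In other words, A[psl₂]^{PSL₂} = A[4det] + α·A[2][4det], with 4det = −α² − 4bc. -/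
open MvPolynomial

universe u

/-!
The restriction `f ↦ f(T, 0, 0)` to diagonal matrices is injective on invariants. Indeed, lower
unitriangular conjugation carries `(x, 0, 0)` to `(x, 0, x r)`, and upper unitriangular conjugation
carries `(a, c u² + a u, c)` to `(a + 2 u c, 0, c)`. If `x` and `c` are regular, then substituting
`x r` or `c u² + a u` for a variable is injective on polynomials, since the leading coefficient in
`r` or `u` is regular; so the value of an invariant at a generic point is determined by its values
at diagonal matrices.

The restriction `φ` of an invariant is moreover fixed by `T ↦ -T` (conjugation by the Weyl element),
so its odd coefficients are killed by `2`. Splitting `φ = h₀(T²) + T h₁(T²)` and noting that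
`α² + 4bc` restricts to `T²`, injectivity gives `f = h₀(α² + 4bc) + α h₁(α² + 4bc)`.
-/

namespace PslTwo

open scoped Polynomial nonZeroDivisors

section Univariate

theorem eq_expand_two_add_X_mul_expand_two {S : Type*} [CommSemiring S] (φ : S[X]) :
    φ = Polynomial.expand S 2 (φ.contract 2) +
      Polynomial.X * Polynomial.expand S 2 (φ.divX.contract 2) := by
  ext n
  rcases n with _ | n
  · simp [Polynomial.coeff_expand two_pos, Polynomial.coeff_contract two_ne_zero]
  · rw [Polynomial.coeff_add, Polynomial.coeff_X_mul]
    simp only [Polynomial.coeff_expand two_pos, Polynomial.coeff_contract two_ne_zero,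
      Polynomial.coeff_divX]
    rcases Nat.even_or_odd' n with ⟨k, rfl | rfl⟩
    · rw [if_neg (by lia), if_pos (by lia), Nat.div_mul_cancel (by lia), zero_add]
    · rw [if_pos (by lia), if_neg (by lia), Nat.div_mul_cancel (by lia), add_zero]

variable {S : Type*} [CommRing S]

theorem two_mul_coeff_eq_zero_of_comp_neg_X {φ : S[X]} (hφ : φ.comp (-Polynomial.X) = φ) {n : ℕ}
    (hn : Odd n) : 2 * φ.coeff n = 0 := by
  have hneg : φ.coeff n * (-1) ^ n = φ.coeff n := by
    rw [← Polynomial.comp_C_mul_X_coeff, map_neg, map_one, neg_one_mul, hφ]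
  rw [hn.neg_one_pow] at hneg
  linear_combination -hneg

theorem mem_nonZeroDivisors_of_coeff_zero {P : S[X]} (hP : P.coeff 0 ∈ S⁰) : P ∈ S[X]⁰ := by
  nontriviality S
  refine Polynomial.mem_nonZeroDivisors_of_trailingCoeff ?_
  rwa [Polynomial.trailingCoeff_eq_coeff_zero (nonZeroDivisors.ne_zero hP)]

theorem aeval_C_mul_X_injective {x : S} (hx : x ∈ S⁰) :
    Function.Injective (Polynomial.aeval (Polynomial.C x * Polynomial.X) : S[X] →ₐ[S] S[X]) := by
  nontriviality S
  refine transcendental_iff_injective.1 (Polynomial.transcendental _ ?_ ?_)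
  · simp [Polynomial.natDegree_C_mul_X x (nonZeroDivisors.ne_zero hx)]
  · rwa [Polynomial.leadingCoeff_C_mul_X]

theorem aeval_quadratic_injective {c : S} (hc : c ∈ S⁰) (a : S) :
    Function.Injective (Polynomial.aeval
      (Polynomial.C c * Polynomial.X ^ 2 + Polynomial.C a * Polynomial.X) : S[X] →ₐ[S] S[X]) := by
  nontriviality S
  have hc₀ : c ≠ 0 := nonZeroDivisors.ne_zero hc
  have hQ : Polynomial.C c * Polynomial.X ^ 2 + Polynomial.C a * Polynomial.X =
      Polynomial.C c * Polynomial.X ^ 2 + Polynomial.C a * Polynomial.X + Polynomial.C 0 := by simp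
  refine transcendental_iff_injective.1 (Polynomial.transcendental _ ?_ ?_)
  · rw [hQ, Polynomial.natDegree_quadratic hc₀]
    exact two_ne_zero
  · rwa [hQ, Polynomial.leadingCoeff_quadratic hc₀]

end Univariate

theorem polynomial_aeval_aeval_vec {A R S : Type*} [CommSemiring A] [CommSemiring R]
    [CommSemiring S] [Algebra A R] [Algebra R S] [Algebra A S] [IsScalarTower A R S] (y : S)
    (P₀ P₁ P₂ : R[X]) (f : MvPolynomial (Fin 3) A) :
    Polynomial.aeval y (aeval ![P₀, P₁, P₂] f) =
      aeval ![Polynomial.aeval y P₀, Polynomial.aeval y P₁, Polynomial.aeval y P₂] f := by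
  refine (comp_aeval_apply _ ((Polynomial.aeval (R := R) y).restrictScalars A) f).trans ?_
  congr 2
  ext i
  fin_cases i <;> rfl

/-- Conjugation by `[[p, q], [r, s]] ∈ SL₂(R)` on `psl₂(R)`, in the coordinates
`v = (α, b, c)` of the matrix `[[α/2, b], [c, -α/2]]`. -/
def conj {R : Type*} [CommRing R] (p q r s : R) (v : Fin 3 → R) : Fin 3 → R :=
  ![v 0 + 2 * q * r * v 0 + 2 * q * s * v 2 - 2 * p * r * v 1,
    p ^ 2 * v 1 - q ^ 2 * v 2 - p * q * v 0,
    s ^ 2 * v 2 - r ^ 2 * v 1 + r * s * v 0]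

/-- The ring `A[psl₂]^{PSL₂}` of polynomial functions on `psl₂` over `A` that are invariant under
conjugation by every point of `SL₂`, with points taken in all `A`-algebras in the universe of
`A`. -/
def invariants (A : Type u) [CommRing A] : Subalgebra A (MvPolynomial (Fin 3) A) where
  carrier := {f | ∀ (R : Type u) [CommRing R] [Algebra A R] (p q r s : R), p * s - q * r = 1 →
    ∀ v : Fin 3 → R, aeval (conj p q r s v) f = aeval v f}
  mul_mem' hf hg R _ _ p q r s h v := by
    rw [map_mul, map_mul, hf R p q r s h v, hg R p q r s h v]
  add_mem' hf hg R _ _ p q r s h v := by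
    rw [map_add, map_add, hf R p q r s h v, hg R p q r s h v]
  algebraMap_mem' a R _ _ p q r s _ v := by rw [AlgHom.commutes, AlgHom.commutes]

/-- The invariant `α² + 4bc = -4 det` of `psl₂`. -/
noncomputable def disc (A : Type*) [CommRing A] : MvPolynomial (Fin 3) A :=
  X 0 ^ 2 + 4 * (X 1 * X 2)

/-- Restriction of polynomial functions on `psl₂` to the diagonal matrices, the image of `α` being
the variable. -/
noncomputable def restrictDiag (A : Type*) [CommRing A] : MvPolynomial (Fin 3) A →ₐ[A] A[X] :=
  aeval ![Polynomial.X, 0, 0]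

theorem restrictDiag_aeval_disc {A : Type*} [CommRing A] (h : A[X]) :
    restrictDiag A (Polynomial.aeval (disc A) h) = Polynomial.expand A 2 h := by
  rw [← Polynomial.aeval_algHom_apply, Polynomial.expand_eq_comp_X_pow, Polynomial.comp_eq_aeval]
  simp [restrictDiag, disc]

section Invariants

variable {A : Type u} [CommRing A]

theorem disc_mem_invariants : disc A ∈ invariants A := by
  intro R _ _ p q r s hdet v
  simp only [disc, conj, map_add, map_mul, map_pow, map_ofNat, aeval_X, Matrix.cons_val]
  grind

theorem aeval_disc_mem_invariants (h : A[X]) : Polynomial.aeval (disc A) h ∈ invariants A :=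
  Algebra.adjoin_le (Set.singleton_subset_iff.2 disc_mem_invariants)
    (Polynomial.aeval_mem_adjoin_singleton A (disc A))

/-- Conjugation fixes `α` modulo `2`. -/
theorem X_zero_mul_mem_invariants {f : MvPolynomial (Fin 3) A} (hf : f ∈ invariants A)
    (htwo : 2 * f = 0) : X 0 * f ∈ invariants A := by
  intro R _ _ p q r s hdet v
  have htwo_eval : 2 * aeval v f = 0 := by
    rw [← map_ofNat (aeval v : MvPolynomial (Fin 3) A →ₐ[A] R), ← map_mul, htwo, map_zero]
  rw [map_mul, map_mul, hf R p q r s hdet v, aeval_X, aeval_X]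
  simp only [conj, Matrix.cons_val]
  linear_combination (q * r * v 0 + q * s * v 2 - p * r * v 1) * htwo_eval

theorem aeval_disc_add_X_zero_mul_mem_invariants (h₀ : A[X]) {h₁ : A[X]}
    (hh₁ : ∀ i, 2 * h₁.coeff i = 0) :
    Polynomial.aeval (disc A) h₀ + X 0 * Polynomial.aeval (disc A) h₁ ∈ invariants A := by
  have htwo : 2 * h₁ = 0 := by
    ext i
    rw [Polynomial.coeff_ofNat_mul, hh₁, Polynomial.coeff_zero]
  refine add_mem (aeval_disc_mem_invariants h₀)
    (X_zero_mul_mem_invariants (aeval_disc_mem_invariants h₁) ?_)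
  rw [← map_ofNat (Polynomial.aeval (R := A) (disc A)), ← map_mul, htwo, map_zero]

variable {f : MvPolynomial (Fin 3) A}

section Points

variable {R : Type u} [CommRing R] [Algebra A R]

theorem aeval_lower_eq_aeval_diag (hf : f ∈ invariants A) {x : R} (hx : x ∈ R⁰) (c : R) :
    aeval ![x, 0, c] f = aeval ![x, 0, 0] f := by
  have hconj : aeval ![Polynomial.C x, 0, Polynomial.C x * Polynomial.X] f =
      aeval ![Polynomial.C x, 0, 0] f := by
    simpa [conj, Polynomial.X_mul_C] using
      hf R[X] 1 0 Polynomial.X 1 (by ring) ![Polynomial.C x, 0, 0]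
  have hgeneric : aeval ![Polynomial.C x, 0, Polynomial.X] f = aeval ![Polynomial.C x, 0, 0] f := by
    apply aeval_C_mul_X_injective hx
    simpa [polynomial_aeval_aeval_vec, Polynomial.algebraMap_eq] using hconj
  simpa [polynomial_aeval_aeval_vec] using congrArg (Polynomial.aeval c) hgeneric

theorem aeval_diag_eq_zero (hf : restrictDiag A f = 0) (x : R) : aeval ![x, 0, 0] f = 0 := by
  simpa [restrictDiag, polynomial_aeval_aeval_vec] using congrArg (Polynomial.aeval (R := A) x) hf

theorem aeval_eq_zero_of_restrictDiag_eq_zero (hf : f ∈ invariants A) (hdiag : restrictDiag A f = 0)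
    {a c : R} (ha : a ∈ R⁰) (hc : c ∈ R⁰) (b : R) : aeval ![a, b, c] f = 0 := by
  let u : R[X] := Polynomial.X
  let Q : R[X] := Polynomial.C c * u ^ 2 + Polynomial.C a * u
  have hreg : Polynomial.C a + 2 * u * Polynomial.C c ∈ R[X]⁰ :=
    mem_nonZeroDivisors_of_coeff_zero (by simpa [u, Polynomial.mul_coeff_zero] using ha)
  have hconj : aeval ![Polynomial.C a, Q, Polynomial.C c] f =
      aeval ![Polynomial.C a + 2 * u * Polynomial.C c, 0, Polynomial.C c] f := by
    rw [← hf R[X] 1 u 0 1 (by ring)]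
    congr 2
    ext1 i
    fin_cases i <;> simp [conj, Q]
    ring
  have hsubst : aeval ![Polynomial.C a, Q, Polynomial.C c] f = 0 := by
    rw [hconj, aeval_lower_eq_aeval_diag hf hreg, aeval_diag_eq_zero hdiag]
  have hgeneric : aeval ![Polynomial.C a, Polynomial.X, Polynomial.C c] f = 0 := by
    apply aeval_quadratic_injective hc a
    simpa [polynomial_aeval_aeval_vec, Polynomial.algebraMap_eq] using hsubst
  simpa [polynomial_aeval_aeval_vec] using congrArg (Polynomial.aeval b) hgeneric

end Points

theorem restrictDiag_injOn_invariants : Set.InjOn (restrictDiag A) (invariants A) := by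
  intro f hf g hg hfg
  have hdiag : restrictDiag A (f - g) = 0 := by rw [map_sub, hfg, sub_self]
  have hgeneric : ![X 0, X 1, X 2] = (X : Fin 3 → MvPolynomial (Fin 3) A) := by
    ext1 i
    fin_cases i <;> rfl
  have hreg (i : Fin 3) : (X i : MvPolynomial (Fin 3) A) ∈ (MvPolynomial (Fin 3) A)⁰ :=
    isRegular_X.mem_nonZeroDivisors
  rw [← sub_eq_zero, ← aeval_X_left_apply (f - g), ← hgeneric]
  exact aeval_eq_zero_of_restrictDiag_eq_zero (sub_mem hf hg) hdiag (hreg 0) (hreg 2) (X 1)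

theorem restrictDiag_comp_neg_X (hf : f ∈ invariants A) :
    (restrictDiag A f).comp (-Polynomial.X) = restrictDiag A f := by
  have hweyl := hf A[X] 0 1 (-1) 0 (by ring) ![Polynomial.X, 0, 0]
  have hneg : conj 0 1 (-1) 0 ![(Polynomial.X : A[X]), 0, 0] = ![-Polynomial.X, 0, 0] := by
    ext1 i
    fin_cases i <;> simp [conj]
    ring
  rw [hneg] at hweyl
  simpa [restrictDiag, Polynomial.comp_eq_aeval, polynomial_aeval_aeval_vec] using hweyl

end Invariants

end PslTwo

/-- Let `A` be a commutative ring with `2`-torsion ideal `A[2]`, and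
`f ∈ A[α, b, c]` (with `α = X 0`, `b = X 1`, `c = X 2`), the coordinate ring of `psl₂`.
For `g = [[p, q], [r, s]] ∈ SL₂(R)` (`ps − qr = 1`) the adjoint action on `(α, b, c)` is
`(α + 2qrα + 2qsc − 2prb, p²b − q²c − pqα, s²c − r²b + rsα)`.  Then `f` is invariant
under this action for every commutative `A`-algebra `R` and every `g` iff
`f = h₀(α² + 4bc) + α·h₁(α² + 4bc)` with `h₀ ∈ A[T]` and `h₁ ∈ A[T]` having all
coefficients in `A[2]`; i.e. `A[psl₂]^{PSL₂} = A[4det] + α·A[2][4det]`. -/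
theorem statement11 {A : Type u} [CommRing A] (f : MvPolynomial (Fin 3) A) :
    (∀ (R : Type u) [CommRing R] [Algebra A R] (p q r s : R), p * s - q * r = 1 →
      ∀ v : Fin 3 → R,
        aeval (![v 0 + 2 * q * r * v 0 + 2 * q * s * v 2 - 2 * p * r * v 1,
                 p ^ 2 * v 1 - q ^ 2 * v 2 - p * q * v 0,
                 s ^ 2 * v 2 - r ^ 2 * v 1 + r * s * v 0] : Fin 3 → R) f = aeval v f) ↔
    (∃ h₀ h₁ : Polynomial A, (∀ i : ℕ, 2 * h₁.coeff i = 0) ∧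
      f = Polynomial.aeval (X 0 ^ 2 + 4 * (X 1 * X 2) : MvPolynomial (Fin 3) A) h₀ +
          X 0 * Polynomial.aeval (X 0 ^ 2 + 4 * (X 1 * X 2) : MvPolynomial (Fin 3) A) h₁) := by
  open PslTwo in
  constructor
  · intro (hf : f ∈ invariants A)
    let φ := restrictDiag A f
    have hodd (i : ℕ) : 2 * (φ.divX.contract 2).coeff i = 0 := by
      rw [Polynomial.coeff_contract two_ne_zero, Polynomial.coeff_divX]
      exact two_mul_coeff_eq_zero_of_comp_neg_X (restrictDiag_comp_neg_X hf) ⟨i, by ring⟩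
    refine ⟨φ.contract 2, φ.divX.contract 2, hodd, restrictDiag_injOn_invariants hf
      (aeval_disc_add_X_zero_mul_mem_invariants _ hodd) ?_⟩
    calc φ = Polynomial.expand A 2 (φ.contract 2) +
          Polynomial.X * Polynomial.expand A 2 (φ.divX.contract 2) :=
        eq_expand_two_add_X_mul_expand_two φ
      _ = restrictDiag A (Polynomial.aeval (disc A) (φ.contract 2) +
          X 0 * Polynomial.aeval (disc A) (φ.divX.contract 2)) := by
        rw [map_add, map_mul, restrictDiag_aeval_disc, restrictDiag_aeval_disc]
        simp [restrictDiag]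
  · rintro ⟨h₀, h₁, hh₁, rfl⟩
    exact aeval_disc_add_X_zero_mul_mem_invariants h₀ hh₁
end

section
/- Let A be a commutative ring and n ≥ 1. Let f ∈ MvPolynomial over A in the (2n)×(2n) matrix entry variables, regarded as a polynomial function on matrices. Suppose f is Sp_{2n}-invariant on the symplectic Lie algebra: for every commutative A-algebra R, every P ∈ Sp_{2n}(R) (i.e. Pᵀ J P = J for J = [[0, Iₙ], [−Iₙ, 0]]) and every M ∈ sp_{2n}(R) (i.e. Mᵀ J + J M = 0), one has f(P M P⁻¹) = f(M), where f(M) means evaluation of f at the entries of M. Then there exists a polynomial g ∈ A[y₁, …, yₙ] such that for every commutative A-algebra R and every M ∈ sp_{2n}(R), f(M) = g(c₂(M), c₄(M), …, c_{2n}(M)), where the cᵢ(M) are defined by det(t·I − M) = t^{2n} + c₂(M)·t^{2n−2} + c₄(M)·t^{2n−4} + … + c_{2n}(M) (the odd coefficients vanish for M ∈ sp_{2n}(R)). Conversely, every function of this form is Sp_{2n}-invariant. In other words, the ring of invariant polynomial functions on sp_{2n} over A is A[c₂, c₄, …, c_{2n}]. -/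
open Matrix MvPolynomial

universe u

universe v

/-!
This is a Chevalley restriction argument, the role of the Cartan subspace being played by the
matrices `N d = [[0, 1], [diag d, 0]]`.

Adjoin to `A` scalars `d i` with invertible differences. Then every element of `sp` is a commutator
`[X, N d]` with `X` in `sp` plus a matrix `[[0, diag b], [diag c, 0]]`, whatever the characteristic.
Hence the matrices `P [[0, diag b], [diag c, 0]] P⁻¹`, with `P` symplectic, contain a formal arc
through `N d` with generic tangent vector. A polynomial vanishing on such an arc is zero, because
its lowest homogeneous component at the base point vanishes on the generic tangent vector.
Conjugation by diagonal matrices turns `[[0, diag b], [diag c, 0]]` into `N (b * c)` once the `b i`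
are invertible squares, which may be assumed generically. Therefore an invariant is determined by
its restriction to the matrices `N d`.

This restriction is symmetric in `d`, as one sees by conjugating with permutation matrices, and the
characteristic polynomial of `N d` is `∏ (t² - d i)`, so the even coefficients restrict to the
elementary symmetric polynomials up to sign.
-/

section FormalArcs

variable {σ : Type*}

theorem aeval_mul_left_of_isHomogeneous {B R : Type*} [CommSemiring B] [CommSemiring R]
    [Algebra B R] {φ : MvPolynomial σ B} {k : ℕ} (hφ : φ.IsHomogeneous k) (r : R) (w : σ → R) :
    aeval (fun s ↦ r * w s) φ = r ^ k * aeval w φ := by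
  simp only [aeval_def, eval₂_eq, Finset.mul_sum]
  refine Finset.sum_congr rfl fun d hd ↦ ?_
  have hdeg : ∑ s ∈ d.support, d s = k := by
    simpa [Finsupp.weight_apply, Finsupp.sum] using hφ (mem_support_iff.mp hd)
  simp only [mul_pow, Finset.prod_mul_distrib, Finset.prod_pow_eq_pow_sum, hdeg]
  ring

theorem coeff_aeval_X_mul_of_lt {B R : Type*} [CommRing B] [CommRing R] [Algebra B R]
    (w : σ → PowerSeries R) {F : MvPolynomial σ B} {k : ℕ}
    (hF : ∀ j < k, homogeneousComponent j F = 0) :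
    PowerSeries.coeff k (aeval (fun s ↦ PowerSeries.X * w s) F) =
      aeval (fun s ↦ PowerSeries.constantCoeff (w s)) (homogeneousComponent k F) := by
  have coeff_component (j : ℕ) : PowerSeries.coeff k
      (aeval (fun s ↦ PowerSeries.X * w s) (homogeneousComponent j F)) =
        if j = k then aeval (fun s ↦ PowerSeries.constantCoeff (w s)) (homogeneousComponent k F)
        else 0 := by
    rcases lt_trichotomy j k with hjk | rfl | hjk
    · simp [hF j hjk, hjk.ne]
    · rw [aeval_mul_left_of_isHomogeneous (homogeneousComponent_isHomogeneous j F),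
        PowerSeries.coeff_X_pow_mul', if_pos le_rfl, Nat.sub_self, if_pos rfl,
        PowerSeries.coeff_zero_eq_constantCoeff_apply, aeval_def, aeval_def, hom_eval₂]
      rfl
    · rw [aeval_mul_left_of_isHomogeneous (homogeneousComponent_isHomogeneous j F),
        PowerSeries.coeff_X_pow_mul', if_neg hjk.not_ge, if_neg hjk.ne']
  conv_lhs => rw [← sum_homogeneousComponent F, map_sum, map_sum]
  simp only [coeff_component, Finset.sum_ite_eq', Finset.mem_range, Nat.lt_succ_iff]
  split_ifs with hk
  · rfl
  · rw [homogeneousComponent_eq_zero _ _ (not_le.mp hk), map_zero]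

theorem eq_zero_of_aeval_X_mul_eq_zero {B : Type*} [CommRing B] {F : MvPolynomial σ B}
    {w : σ → PowerSeries (MvPolynomial σ B)} (hw : ∀ s, PowerSeries.constantCoeff (w s) = X s)
    (hF : aeval (fun s ↦ PowerSeries.X * w s) F = 0) : F = 0 := by
  have component_eq_zero (k : ℕ) : homogeneousComponent k F = 0 := by
    induction k using Nat.strong_induction_on with
    | _ k ih => simpa [hF, hw] using (coeff_aeval_X_mul_of_lt w ih).symm
  rw [← sum_homogeneousComponent F]
  exact Finset.sum_eq_zero fun k _ ↦ component_eq_zero k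

theorem exists_eq_C_add_X_mul {R : Type*} [CommRing R] (y : PowerSeries R) :
    ∃ w, y = PowerSeries.C (PowerSeries.constantCoeff y) + PowerSeries.X * w ∧
      PowerSeries.constantCoeff w = PowerSeries.coeff 1 y :=
  ⟨.mk fun k ↦ PowerSeries.coeff (k + 1) y,
    by rw [add_comm]; exact PowerSeries.eq_X_mul_shift_add_const y, by simp⟩

theorem eq_zero_of_aeval_generic_arc_eq_zero {A B : Type*} [CommRing A] [CommRing B]
    [Algebra A B] (hAB : Function.Injective (algebraMap A B)) {F : MvPolynomial σ A} {x : σ → B}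
    {y : σ → PowerSeries (MvPolynomial σ B)}
    (hy₀ : ∀ s, PowerSeries.constantCoeff (y s) = C (x s))
    (hy₁ : ∀ s, PowerSeries.coeff 1 (y s) = X s) (hF : aeval y F = 0) : F = 0 := by
  choose w hyw hw using fun s ↦ exists_eq_C_add_X_mul (y s)
  simp only [hy₀, hy₁] at hyw hw
  let translate : MvPolynomial σ B := aeval (fun s ↦ C (x s) + X s) F
  have translate_eq_zero : translate = 0 := by
    refine eq_zero_of_aeval_X_mul_eq_zero hw ?_
    rw [← hF, ← AlgHom.restrictScalars_apply A, ← AlgHom.comp_apply, comp_aeval]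
    congr 2
    ext1 s
    rw [hyw s, AlgHom.restrictScalars_apply, map_add, aeval_X, aeval_C,
      PowerSeries.algebraMap_apply, algebraMap_eq]
  have untranslate : aeval (fun s ↦ X s - C (x s)) translate = map (algebraMap A B) F := by
    rw [← AlgHom.restrictScalars_apply A, ← AlgHom.comp_apply, comp_aeval, ← aeval_X_left_apply
      (map (algebraMap A B) F), aeval_map_algebraMap]
    simp [algebraMap_eq]
  refine map_injective _ hAB ?_
  rw [← untranslate, translate_eq_zero, map_zero, map_zero]

end FormalArcs

section CharpolyAntidiag

variable {l R : Type*} [Fintype l] [DecidableEq l] [CommRing R]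

theorem charpoly_fromBlocks_zero₁₁_zero₂₂ (B C : Matrix l l R) :
    (fromBlocks 0 B C 0).charpoly = Polynomial.expand R 2 (B * C).charpoly := by
  let Y : Matrix l l (Polynomial R) := scalar l Polynomial.X
  -- Block row reduction over `R[t]`, where `det Y = t ^ card l` can be cancelled afterwards.
  have mul_charmatrix : fromBlocks Y (B.map Polynomial.C) 0 1 * (fromBlocks 0 B C 0).charmatrix =
      fromBlocks ((Polynomial.expand R 2).mapMatrix (B * C).charmatrix) 0
        (-C.map Polynomial.C) Y := by
    have charmatrix_zero : (0 : Matrix l l R).charmatrix = Y := by simp [charmatrix, Y]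
    have commute : B.map Polynomial.C * Y = Y * B.map Polynomial.C :=
      (scalar_commute _ (Commute.all _) _).eq.symm
    have expand_charmatrix :
        (Polynomial.expand R 2).mapMatrix (B * C).charmatrix =
          Y * Y - B.map Polynomial.C * C.map Polynomial.C := by
      rw [charmatrix, map_sub]
      congr 1
      · ext1 i j; by_cases hij : i = j <;> simp [Y, hij, pow_two]
      · ext1 i j; simp [Matrix.mul_apply]
    rw [charmatrix_fromBlocks, charmatrix_zero, fromBlocks_multiply, expand_charmatrix]
    simp [commute, sub_eq_add_neg]
  have det_eq := congrArg det mul_charmatrix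
  rw [det_mul, det_fromBlocks_zero₂₁, det_fromBlocks_zero₁₂, det_one, mul_one, mul_comm] at det_eq
  have det_Y : Y.det ∈ nonZeroDivisors (Polynomial R) := by
    simpa [Y] using pow_mem Polynomial.X_mem_nonzeroDivisors (Fintype.card l)
  rw [charpoly, charpoly, AlgHom.map_det]
  exact (mul_cancel_right_mem_nonZeroDivisors det_Y).mp det_eq

end CharpolyAntidiag

section Symplectic

open LieAlgebra.Symplectic (sp)

variable {l R : Type*} [DecidableEq l] [CommRing R]

theorem J_eq_neg_fromBlocks : J l R = -fromBlocks 0 1 (-1) 0 := by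
  simp [J, fromBlocks_neg]

variable [Fintype l]

theorem mem_sp_iff {M : Matrix (l ⊕ l) (l ⊕ l) R} :
    M ∈ sp l R ↔ Mᵀ * J l R + J l R * M = 0 := by
  rw [sp, mem_skewAdjointMatricesLieSubalgebra, mem_skewAdjointMatricesSubmodule,
    Matrix.IsSkewAdjoint, Matrix.IsAdjointPair, Matrix.mul_neg, eq_neg_iff_add_eq_zero]

theorem fromBlocks_mem_sp_iff {A B C D : Matrix l l R} :
    fromBlocks A B C D ∈ sp l R ↔ B.IsSymm ∧ C.IsSymm ∧ D = -Aᵀ := by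
  simp only [mem_sp_iff, J, fromBlocks_transpose, fromBlocks_multiply, fromBlocks_add,
    ← fromBlocks_zero, fromBlocks_inj, Matrix.IsSymm]
  simp only [Matrix.mul_zero, Matrix.mul_one, Matrix.zero_mul, Matrix.one_mul, Matrix.mul_neg,
    Matrix.neg_mul, zero_add, add_zero, add_neg_eq_zero, neg_add_eq_zero]
  constructor
  · rintro ⟨hC, hA, -, hB⟩
    exact ⟨hB, hC, hA.symm ▸ rfl⟩
  · rintro ⟨hB, hC, rfl⟩
    simp [hB, hC]

theorem mem_sp_iff_isSymm_mul_J {M : Matrix (l ⊕ l) (l ⊕ l) R} :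
    M ∈ sp l R ↔ (M * J l R).IsSymm := by
  rw [← fromBlocks_toBlocks M, fromBlocks_mem_sp_iff, J, fromBlocks_multiply,
    isSymm_fromBlocks_iff]
  simp only [Matrix.mul_zero, Matrix.mul_one, Matrix.mul_neg, zero_add, add_zero, isSymm_neg_iff,
    transpose_neg]
  exact ⟨fun ⟨hB, hC, hD⟩ ↦ ⟨hB, hD.symm, by rw [hD, transpose_neg, transpose_transpose], hC⟩,
    fun ⟨hB, hD, _, hC⟩ ↦ ⟨hB, hC, hD.symm⟩⟩

theorem conj_mem_sp {P M : Matrix (l ⊕ l) (l ⊕ l) R} (hP : P ∈ symplecticGroup l R)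
    (hM : M ∈ sp l R) : P * M * P⁻¹ ∈ sp l R := by
  have inv_mul_J : P⁻¹ * J l R = J l R * Pᵀ := by
    conv_lhs => rw [← SymplecticGroup.mem_iff.mp hP, Matrix.mul_assoc]
    exact nonsing_inv_mul_cancel_left _ _ (SymplecticGroup.symplectic_det hP)
  have conj_mul_J : P * M * P⁻¹ * J l R = P * (M * J l R) * Pᵀ := by
    simp only [Matrix.mul_assoc, inv_mul_J]
  rw [mem_sp_iff_isSymm_mul_J] at hM ⊢
  rw [conj_mul_J, Matrix.IsSymm, transpose_mul, transpose_mul, transpose_transpose, hM.eq,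
    ← Matrix.mul_assoc]

theorem levi_mem_symplecticGroup {g h : Matrix l l R} (hg : h * g = 1) :
    fromBlocks g 0 0 hᵀ ∈ symplecticGroup l R := by
  simp [SymplecticGroup.fromBlocks_mem_iff, ← transpose_mul, hg]

theorem fromBlocks_one_zero₂₁_mem_symplecticGroup {B : Matrix l l R} (hB : B.IsSymm) :
    fromBlocks 1 B 0 1 ∈ symplecticGroup l R := by
  simp [SymplecticGroup.fromBlocks_mem_iff, hB.eq]

theorem fromBlocks_one_zero₁₂_mem_symplecticGroup {C : Matrix l l R} (hC : C.IsSymm) :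
    fromBlocks 1 0 C 1 ∈ symplecticGroup l R := by
  simp [SymplecticGroup.fromBlocks_mem_iff, hC.eq]

theorem charpoly_conj_of_isUnit_det {m : Type*} [Fintype m] [DecidableEq m] {P : Matrix m m R}
    (hP : IsUnit P.det) (M : Matrix m m R) : (P * M * P⁻¹).charpoly = M.charpoly := by
  rw [charpoly_mul_comm, nonsing_inv_mul_cancel_left _ _ hP]

theorem mem_symplecticGroup_iff_fromBlocks {P : Matrix (l ⊕ l) (l ⊕ l) R} :
    P ∈ symplecticGroup l R ↔
      Pᵀ * fromBlocks 0 1 (-1) 0 * P = fromBlocks 0 1 (-1) 0 := by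
  rw [SymplecticGroup.mem_iff', J_eq_neg_fromBlocks]
  simp only [Matrix.mul_neg, Matrix.neg_mul, neg_inj]

theorem mem_sp_iff_fromBlocks {M : Matrix (l ⊕ l) (l ⊕ l) R} :
    M ∈ sp l R ↔ Mᵀ * fromBlocks 0 1 (-1) 0 + fromBlocks 0 1 (-1) 0 * M = 0 := by
  rw [mem_sp_iff, J_eq_neg_fromBlocks, Matrix.mul_neg, Matrix.neg_mul, ← neg_add, neg_eq_zero]

end Symplectic

section Jets

variable {U l m k : Type*} [CommRing U]

/-- `HasJet M M₀ M₁` says that the matrix of power series `M` is `M₀ + M₁ T` modulo `T ^ 2`. -/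
structure HasJet (M : Matrix l m (PowerSeries U)) (M₀ M₁ : Matrix l m U) : Prop where
  map_constantCoeff : M.map PowerSeries.constantCoeff = M₀
  map_coeff_one : M.map (PowerSeries.coeff 1) = M₁

/-- The power series matrix `M₀ + M₁ T`, the standard arc with a prescribed 1-jet. -/
noncomputable def linearArc (M₀ M₁ : Matrix l m U) : Matrix l m (PowerSeries U) :=
  of fun i j ↦ PowerSeries.C (M₀ i j) + PowerSeries.C (M₁ i j) * PowerSeries.X

theorem hasJet_linearArc (M₀ M₁ : Matrix l m U) : HasJet (linearArc M₀ M₁) M₀ M₁ where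
  map_constantCoeff := by ext; simp [linearArc]
  map_coeff_one := by ext; simp [linearArc, PowerSeries.coeff_C]

namespace HasJet

theorem mul [Fintype m] {M : Matrix l m (PowerSeries U)} {N : Matrix m k (PowerSeries U)}
    {M₀ M₁ : Matrix l m U} {N₀ N₁ : Matrix m k U} (hM : HasJet M M₀ M₁) (hN : HasJet N N₀ N₁) :
    HasJet (M * N) (M₀ * N₀) (M₁ * N₀ + M₀ * N₁) where
  map_constantCoeff := by rw [Matrix.map_mul, hM.map_constantCoeff, hN.map_constantCoeff]
  map_coeff_one := by
    obtain ⟨rfl, rfl⟩ := hM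
    obtain ⟨rfl, rfl⟩ := hN
    ext i j
    simp [Matrix.mul_apply, PowerSeries.coeff_mul, Finset.Nat.antidiagonal_succ,
      ← Finset.sum_add_distrib, add_comm]

theorem transpose {M : Matrix l m (PowerSeries U)} {M₀ M₁ : Matrix l m U} (hM : HasJet M M₀ M₁) :
    HasJet Mᵀ M₀ᵀ M₁ᵀ where
  map_constantCoeff := by rw [transpose_map, hM.map_constantCoeff]
  map_coeff_one := by rw [transpose_map, hM.map_coeff_one]

protected theorem zero : HasJet (0 : Matrix l m (PowerSeries U)) 0 0 where
  map_constantCoeff := Matrix.map_zero _ (map_zero _)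
  map_coeff_one := Matrix.map_zero _ (map_zero _)

protected theorem one [DecidableEq l] : HasJet (1 : Matrix l l (PowerSeries U)) 1 0 where
  map_constantCoeff := Matrix.map_one _ (map_zero _) (map_one _)
  map_coeff_one := by
    ext i j
    by_cases hij : i = j <;> simp [hij, PowerSeries.coeff_one]

theorem fromBlocks {l' m' : Type*} {A : Matrix l m (PowerSeries U)}
    {B : Matrix l m' (PowerSeries U)} {C : Matrix l' m (PowerSeries U)}
    {D : Matrix l' m' (PowerSeries U)} {A₀ A₁ : Matrix l m U} {B₀ B₁ : Matrix l m' U}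
    {C₀ C₁ : Matrix l' m U} {D₀ D₁ : Matrix l' m' U} (hA : HasJet A A₀ A₁) (hB : HasJet B B₀ B₁)
    (hC : HasJet C C₀ C₁) (hD : HasJet D D₀ D₁) :
    HasJet (fromBlocks A B C D) (fromBlocks A₀ B₀ C₀ D₀) (fromBlocks A₁ B₁ C₁ D₁) where
  map_constantCoeff := by
    rw [fromBlocks_map, hA.map_constantCoeff, hB.map_constantCoeff, hC.map_constantCoeff,
      hD.map_constantCoeff]
  map_coeff_one := by
    rw [fromBlocks_map, hA.map_coeff_one, hB.map_coeff_one, hC.map_coeff_one, hD.map_coeff_one]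

section Square

variable [Fintype m] [DecidableEq m] {P N : Matrix m m (PowerSeries U)} {X N₀ N₁ : Matrix m m U}

theorem isUnit_det (hP : HasJet P 1 X) : IsUnit P.det := by
  rw [PowerSeries.isUnit_iff_constantCoeff, RingHom.map_det, RingHom.mapMatrix_apply,
    hP.map_constantCoeff, det_one]
  exact isUnit_one

theorem inv (hP : HasJet P 1 X) : HasJet P⁻¹ 1 (-X) := by
  have hQ : HasJet P⁻¹ _ _ := ⟨rfl, rfl⟩
  have inv_mul := nonsing_inv_mul P hP.isUnit_det ▸ hQ.mul hP
  have hQ₀ := inv_mul.map_constantCoeff.symm.trans HasJet.one.map_constantCoeff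
  have hQ₁ := inv_mul.map_coeff_one.symm.trans HasJet.one.map_coeff_one
  rw [Matrix.mul_one] at hQ₀ hQ₁
  rw [hQ₀, Matrix.one_mul] at hQ₁
  exact ⟨hQ₀, eq_neg_of_add_eq_zero_left hQ₁⟩

theorem conj (hP : HasJet P 1 X) (hN : HasJet N N₀ N₁) :
    HasJet (P * N * P⁻¹) N₀ (X * N₀ - N₀ * X + N₁) := by
  convert (hP.mul hN).mul hP.inv using 1
  · simp
  · simp only [Matrix.one_mul, Matrix.mul_one, Matrix.mul_neg]
    abel

end Square

end HasJet

end Jets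

section SymplecticArcs

open LieAlgebra.Symplectic (sp)

variable {l U : Type*} [CommRing U]

theorem isSymm_linearArc {M₀ M₁ : Matrix l l U} (h₀ : M₀.IsSymm) (h₁ : M₁.IsSymm) :
    (linearArc M₀ M₁).IsSymm :=
  .ext fun i j ↦ by simp [linearArc, h₀.apply i j, h₁.apply i j]

variable [Fintype l] [DecidableEq l]

theorem exists_mem_symplecticGroup_hasJet {X : Matrix (l ⊕ l) (l ⊕ l) U} (hX : X ∈ sp l U) :
    ∃ P ∈ symplecticGroup l (PowerSeries U), HasJet P 1 X := by
  obtain ⟨hβ, hγ, hδ⟩ := fromBlocks_mem_sp_iff.mp ((fromBlocks_toBlocks X).symm ▸ hX)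
  have hg := hasJet_linearArc 1 X.toBlocks₁₁
  -- A product of unipotent and Levi factors avoids the denominators of `exp (T X)`.
  have upper := HasJet.one.fromBlocks (hasJet_linearArc 0 X.toBlocks₁₂) .zero (.one (l := l))
  have lower := HasJet.one.fromBlocks .zero (hasJet_linearArc 0 X.toBlocks₂₁) (.one (l := l))
  have levi := hg.fromBlocks .zero .zero hg.inv.transpose
  refine ⟨_, mul_mem
    (fromBlocks_one_zero₂₁_mem_symplecticGroup (isSymm_linearArc isSymm_zero hβ)) <| mul_mem
    (fromBlocks_one_zero₁₂_mem_symplecticGroup (isSymm_linearArc isSymm_zero hγ))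
    (levi_mem_symplecticGroup (nonsing_inv_mul _ hg.isUnit_det)), ?_⟩
  convert upper.mul (lower.mul levi) using 1
  · simp
  · conv_lhs => rw [← fromBlocks_toBlocks X, hδ]
    simp [fromBlocks_add]

end SymplecticArcs

section Antidiagonal

open LieAlgebra.Symplectic (sp)

variable {l R : Type*} [DecidableEq l] [CommRing R]

/-- The block-antidiagonal matrix `[[0, diag b], [diag c, 0]]`. The matrices with `b = 1` play the
role of a Cartan subspace: invariants are determined by their restriction to them. -/
def blockAntidiag (b c : l → R) : Matrix (l ⊕ l) (l ⊕ l) R :=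
  fromBlocks 0 (diagonal b) (diagonal c) 0

theorem blockAntidiag_map {S F : Type*} [CommRing S] [FunLike F R S] [ZeroHomClass F R S] (φ : F)
    (b c : l → R) :
    (blockAntidiag b c).map φ = blockAntidiag (fun i ↦ φ (b i)) (fun i ↦ φ (c i)) := by
  simp only [blockAntidiag, fromBlocks_map, diagonal_map (map_zero φ),
    Matrix.map_zero _ (map_zero φ)]

variable [Fintype l]

theorem blockAntidiag_mem_sp (b c : l → R) : blockAntidiag b c ∈ sp l R :=
  fromBlocks_mem_sp_iff.mpr ⟨isSymm_diagonal b, isSymm_diagonal c, by simp⟩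

end Antidiagonal

section Transversality

open LieAlgebra.Symplectic (sp)

theorem ringInverse_neg {R : Type*} [Ring R] (x : R) : Ring.inverse (-x) = -Ring.inverse x := by
  by_cases hx : IsUnit x
  · obtain ⟨u, rfl⟩ := hx
    rw [← Units.val_neg, Ring.inverse_unit, Ring.inverse_unit, inv_neg, Units.val_neg]
  · rw [Ring.inverse_non_unit x hx, Ring.inverse_non_unit _ (by rwa [IsUnit.neg_iff]), neg_zero]

variable {l R : Type*} [CommRing R] {d : l → R}

theorem exists_antisymm_inverse_sub (hd : Pairwise fun i j ↦ IsUnit (d i - d j)) :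
    ∃ e : l → l → R, (∀ i, e i i = 0) ∧ (∀ i j, e j i = -e i j) ∧
      ∀ i j, i ≠ j → e i j * (d i - d j) = 1 :=
  ⟨fun i j ↦ Ring.inverse (d i - d j), fun i ↦ by simp only [sub_self, Ring.inverse_zero],
    fun i j ↦ by simp only [← ringInverse_neg, neg_sub],
    fun _ _ hij ↦ Ring.inverse_mul_cancel _ (hd hij)⟩

variable [Fintype l] [DecidableEq l]

theorem exists_add_transpose_eq (hd : Pairwise fun i j ↦ IsUnit (d i - d j))
    {B C : Matrix l l R} (hB : B.IsSymm) (hC : C.IsSymm) :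
    ∃ α : Matrix l l R, α + αᵀ = B - diagonal B.diag ∧
      αᵀ * diagonal d + diagonal d * α = diagonal C.diag - C := by
  obtain ⟨e, e_self, e_antisymm, e_mul⟩ := exists_antisymm_inverse_sub hd
  -- Off the diagonal, `α i j` and `α j i` solve a linear system of determinant `± (d i - d j)`.
  refine ⟨of fun i j ↦ -(C i j + d j * B i j) * e i j, ?_, ?_⟩ <;>
    ext i j <;> rcases eq_or_ne i j with rfl | hij
  · simp [e_self]
  · simp only [Matrix.add_apply, Matrix.sub_apply, of_apply, transpose_apply,
      diagonal_apply_ne _ hij, hB.apply i j, hC.apply i j, e_antisymm i j]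
    linear_combination B i j * e_mul i j hij
  · simp [e_self]
  · simp only [Matrix.add_apply, Matrix.sub_apply, mul_diagonal, diagonal_mul, of_apply,
      transpose_apply, diagonal_apply_ne _ hij, hB.apply i j, hC.apply i j, e_antisymm i j]
    linear_combination -C i j * e_mul i j hij

theorem exists_isSymm_mul_diagonal_sub (hd : Pairwise fun i j ↦ IsUnit (d i - d j))
    (A : Matrix l l R) :
    ∃ β : Matrix l l R, β.IsSymm ∧ (β * diagonal d - A).IsSymm := by
  obtain ⟨e, -, e_antisymm, e_mul⟩ := exists_antisymm_inverse_sub hd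
  refine ⟨of fun i j ↦ (A j i - A i j) * e i j, .ext fun i j ↦ ?_, .ext fun i j ↦ ?_⟩
  · simp only [of_apply, e_antisymm i j]
    ring
  · rcases eq_or_ne i j with rfl | hij
    · rfl
    simp only [Matrix.sub_apply, mul_diagonal, of_apply, e_antisymm i j]
    linear_combination (A j i - A i j) * e_mul i j hij

theorem exists_eq_commutator_add_blockAntidiag (hd : Pairwise fun i j ↦ IsUnit (d i - d j))
    {Y : Matrix (l ⊕ l) (l ⊕ l) R} (hY : Y ∈ sp l R) :
    ∃ X ∈ sp l R, ∃ b c : l → R,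
      X * blockAntidiag 1 d - blockAntidiag 1 d * X + blockAntidiag b c = Y := by
  rw [← fromBlocks_toBlocks Y] at hY ⊢
  generalize Y.toBlocks₁₁ = A, Y.toBlocks₁₂ = B, Y.toBlocks₂₁ = C, Y.toBlocks₂₂ = D at hY ⊢
  obtain ⟨hB, hC, rfl⟩ := fromBlocks_mem_sp_iff.mp hY
  obtain ⟨α, hαB, hαC⟩ := exists_add_transpose_eq hd hB hC
  obtain ⟨β, hβ, hγ⟩ := exists_isSymm_mul_diagonal_sub hd A
  have hγ' : diagonal d * β - Aᵀ = β * diagonal d - A := by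
    simpa [Matrix.IsSymm, hβ.eq] using hγ
  refine ⟨fromBlocks α β (β * diagonal d - A) (-αᵀ),
    fromBlocks_mem_sp_iff.mpr ⟨hβ, hγ, rfl⟩, B.diag, C.diag, ?_⟩
  simp only [blockAntidiag, Pi.one_def, diagonal_one, fromBlocks_multiply, sub_eq_add_neg,
    fromBlocks_neg, fromBlocks_add, fromBlocks_inj, Matrix.mul_zero, Matrix.mul_one,
    Matrix.zero_mul, Matrix.one_mul, Matrix.neg_mul, zero_add, add_zero, neg_neg]
  refine ⟨by abel, ?_, ?_, ?_⟩
  · rw [hαB, sub_add_cancel]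
  · rw [← neg_add, hαC, neg_sub, sub_add_cancel]
  · rw [← sub_eq_add_neg (β * _), ← hγ']
    abel

theorem exists_conj_blockAntidiag_hasJet (hd : Pairwise fun i j ↦ IsUnit (d i - d j))
    {Y : Matrix (l ⊕ l) (l ⊕ l) R} (hY : Y ∈ sp l R) :
    ∃ P ∈ symplecticGroup l (PowerSeries R), ∃ b c : l → PowerSeries R,
      HasJet (P * blockAntidiag b c * P⁻¹) (blockAntidiag 1 d) Y := by
  obtain ⟨X, hX, b, c, rfl⟩ := exists_eq_commutator_add_blockAntidiag hd hY
  obtain ⟨P, hP, jet_P⟩ := exists_mem_symplecticGroup_hasJet hX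
  refine ⟨P, hP, fun i ↦ 1 + PowerSeries.C (b i) * PowerSeries.X,
    fun i ↦ PowerSeries.C (d i) + PowerSeries.C (c i) * PowerSeries.X, jet_P.conj ⟨?_, ?_⟩⟩
  · rw [blockAntidiag_map]
    simp [Pi.one_def]
  · rw [blockAntidiag_map]
    simp [PowerSeries.coeff_one, PowerSeries.coeff_C]

end Transversality

section Coordinates

open LieAlgebra.Symplectic (sp)

variable {l R : Type*} [CommRing R]

/-- Linear coordinates on `sp`: `spOfSym y` is the matrix `M` with `(M * J) i j = y s(i, j)`. -/
def spOfSym (y : Sym2 (l ⊕ l) → R) : Matrix (l ⊕ l) (l ⊕ l) R :=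
  fromBlocks (-of fun i j ↦ y s(.inl i, .inr j)) (of fun i j ↦ y s(.inl i, .inl j))
    (-of fun i j ↦ y s(.inr i, .inr j)) (of fun i j ↦ y s(.inr i, .inl j))

theorem spOfSym_map {S F : Type*} [CommRing S] [FunLike F R S] [AddMonoidHomClass F R S] (φ : F)
    (y : Sym2 (l ⊕ l) → R) : (spOfSym y).map φ = spOfSym fun s ↦ φ (y s) := by
  rw [spOfSym, spOfSym, fromBlocks_map]
  congr 1 <;> ext <;> simp

theorem spOfSym_injective : Function.Injective (spOfSym (l := l) (R := R)) := by
  intro y z h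
  obtain ⟨h₁₁, h₁₂, h₂₁, h₂₂⟩ := fromBlocks_inj.mp h
  rw [neg_inj] at h₁₁ h₂₁
  ext ⟨i | i, j | j⟩
  exacts [congrFun₂ h₁₂ i j, congrFun₂ h₁₁ i j, congrFun₂ h₂₂ i j, congrFun₂ h₂₁ i j]

variable [Fintype l] [DecidableEq l]

theorem spOfSym_mul_J (y : Sym2 (l ⊕ l) → R) : spOfSym y * J l R = of fun i j ↦ y s(i, j) := by
  rw [spOfSym, J, fromBlocks_multiply]
  ext (i | i) (j | j) <;> simp

theorem spOfSym_mem_sp (y : Sym2 (l ⊕ l) → R) : spOfSym y ∈ sp l R := by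
  rw [mem_sp_iff_isSymm_mul_J, spOfSym_mul_J]
  exact .ext fun i j ↦ congrArg y Sym2.eq_swap

theorem exists_spOfSym_eq {M : Matrix (l ⊕ l) (l ⊕ l) R} (hM : M ∈ sp l R) :
    ∃ y, spOfSym y = M := by
  have isSymm_mul_J := mem_sp_iff_isSymm_mul_J.mp hM
  have isUnit_J : IsUnit (J l R) := (isUnit_iff_isUnit_det _).mpr (isUnit_det_J l R)
  refine ⟨Sym2.lift ⟨(M * J l R), fun i j ↦ isSymm_mul_J.apply j i⟩, ?_⟩
  rw [← isUnit_J.mul_left_inj, spOfSym_mul_J]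
  rfl

end Coordinates

theorem exists_pairwise_isUnit_sub (A : Type u) [CommRing A] (l : Type*) [Finite l] :
    ∃ (B : Type u) (_ : CommRing B) (_ : Algebra A B) (d : l → B),
      Function.Injective (algebraMap A B) ∧ Pairwise fun i j ↦ IsUnit (d i - d j) := by
  cases subsingleton_or_nontrivial A
  · exact ⟨A, inferInstance, .id A, 0, Function.injective_id,
      fun _ _ _ ↦ isUnit_of_subsingleton _⟩
  obtain ⟨k, ⟨e⟩⟩ := Finite.exists_equiv_fin l
  let B := FractionRing (Polynomial A)
  refine ⟨B, inferInstance, inferInstance, fun i ↦ algebraMap (Polynomial A) B (.X ^ (e i : ℕ)),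
    ?_, fun i j hij ↦ ?_⟩
  · rw [IsScalarTower.algebraMap_eq A (Polynomial A) B]
    exact (IsFractionRing.injective (Polynomial A) B).comp Polynomial.C_injective
  wlog h : e j < e i generalizing i j
  · have lt : e i < e j := lt_of_le_of_ne (not_lt.mp h) (e.injective.ne hij)
    rw [← neg_sub]
    exact (this j i hij.symm lt).neg
  have monic : (.X ^ (e i : ℕ) - .X ^ (e j : ℕ) : Polynomial A).Monic :=
    Polynomial.monic_X_pow_sub (by rw [Polynomial.degree_X_pow]; exact_mod_cast h)
  rw [← map_sub]
  exact IsLocalization.map_units B ⟨_, monic.mem_nonZeroDivisors⟩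

section Invariants

open LieAlgebra.Symplectic (sp)

/-- Evaluation of a polynomial in the matrix entry variables at a matrix. -/
noncomputable def evalMatrix {m A R : Type*} [CommRing A] [CommRing R] [Algebra A R]
    (M : Matrix m m R) : MvPolynomial (m × m) A →ₐ[A] R :=
  aeval fun p ↦ M p.1 p.2

theorem map_evalMatrix {m A R S : Type*} [CommRing A] [CommRing R] [CommRing S] [Algebra A R]
    [Algebra A S] (φ : R →ₐ[A] S) (M : Matrix m m R) (f : MvPolynomial (m × m) A) :
    φ (evalMatrix M f) = evalMatrix (M.map φ) f := by
  rw [evalMatrix, ← AlgHom.comp_apply, comp_aeval]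
  rfl

variable {A : Type u} {l : Type v} [DecidableEq l] [CommRing A]

/-- The restriction of a polynomial function on matrices to the matrices `[[0, 1], [diag d, 0]]`,
as a polynomial in the entries of `d`. -/
noncomputable def restrictAntidiag :
    MvPolynomial ((l ⊕ l) × (l ⊕ l)) A →ₐ[A] MvPolynomial l A :=
  evalMatrix (blockAntidiag 1 X)

theorem aeval_restrictAntidiag {R : Type*} [CommRing R] [Algebra A R] (d : l → R)
    (f : MvPolynomial ((l ⊕ l) × (l ⊕ l)) A) :
    aeval d (restrictAntidiag f) = evalMatrix (blockAntidiag 1 d) f := by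
  rw [restrictAntidiag, map_evalMatrix, blockAntidiag_map]
  simp [Pi.one_def]

variable [Fintype l]

/-- Invariance of the polynomial function `f` on the Lie algebra `sp` under the conjugation action
of the symplectic group, over all `A`-algebras. -/
def IsSpInvariant (f : MvPolynomial ((l ⊕ l) × (l ⊕ l)) A) : Prop :=
  ∀ (R : Type (max u v)) [CommRing R] [Algebra A R] (P M : Matrix (l ⊕ l) (l ⊕ l) R),
    P ∈ symplecticGroup l R → M ∈ sp l R → evalMatrix (P * M * P⁻¹) f = evalMatrix M f

namespace IsSpInvariant

variable {f g : MvPolynomial ((l ⊕ l) × (l ⊕ l)) A}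

theorem sub (hf : IsSpInvariant f) (hg : IsSpInvariant g) : IsSpInvariant (f - g) :=
  fun R _ _ P M hP hM ↦ by rw [map_sub, map_sub, hf R P M hP hM, hg R P M hP hM]

theorem evalMatrix_eq_of_mul_eq (hf : IsSpInvariant f) {R : Type (max u v)} [CommRing R]
    [Algebra A R] {P M M' : Matrix (l ⊕ l) (l ⊕ l) R} (hP : P ∈ symplecticGroup l R)
    (hM : M ∈ sp l R) (h : M' * P = P * M) : evalMatrix M' f = evalMatrix M f := by
  rw [← hf R P M hP hM, ← h, mul_nonsing_inv_cancel_right _ _ (SymplecticGroup.symplectic_det hP)]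

theorem isSymmetric_restrictAntidiag (hf : IsSpInvariant f) :
    (restrictAntidiag f).IsSymmetric := by
  intro e
  let Q : Matrix l l (MvPolynomial l A) := e.permMatrix _
  have Q_mul : Qᵀ * Q = 1 := by
    rw [transpose_permMatrix, ← permMatrix_mul, mul_inv_cancel, permMatrix_one]
  have diagonal_mul_Q : diagonal (X ∘ e) * Q = Q * diagonal X := by
    ext1 i j
    by_cases hij : e i = j <;>
      simp [Q, Equiv.Perm.permMatrix, PEquiv.toMatrix_apply, Equiv.toPEquiv_apply, hij]
  rw [rename_eq_aeval, aeval_restrictAntidiag, restrictAntidiag]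
  refine hf.evalMatrix_eq_of_mul_eq (levi_mem_symplecticGroup Q_mul) (blockAntidiag_mem_sp _ _) ?_
  simp [blockAntidiag, fromBlocks_multiply, diagonal_mul_Q, Pi.one_def]

theorem evalMatrix_blockAntidiag_sq (hf : IsSpInvariant f) {R : Type (max u v)} [CommRing R]
    [Algebra A R] (t : l → Rˣ) (c : l → R) :
    evalMatrix (blockAntidiag (fun i ↦ (t i : R) ^ 2) c) f =
      evalMatrix (blockAntidiag 1 fun i ↦ t i ^ 2 * c i) f := by
  let D : Matrix l l R := diagonal fun i ↦ t i
  let D' : Matrix l l R := diagonal fun i ↦ ↑(t i)⁻¹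
  have D'_mul : D' * D = 1 := by simp [D, D']
  refine hf.evalMatrix_eq_of_mul_eq (levi_mem_symplecticGroup D'_mul) (blockAntidiag_mem_sp _ _) ?_
  have upper (i : l) : (t i : R) ^ 2 * ↑(t i)⁻¹ = t i := by rw [pow_two, Units.mul_inv_cancel_right]
  have lower (i : l) : c i * t i = ↑(t i)⁻¹ * (t i ^ 2 * c i) := by
    rw [pow_two, mul_assoc, Units.inv_mul_cancel_left, mul_comm]
  rw [blockAntidiag, blockAntidiag, fromBlocks_multiply, fromBlocks_multiply]
  simp [D, D', upper, lower]

theorem evalMatrix_blockAntidiag (hf : IsSpInvariant f) {R : Type*} [CommRing R] [Algebra A R]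
    (b c : l → R) :
    evalMatrix (blockAntidiag b c) f = aeval (fun i ↦ b i * c i) (restrictAntidiag f) := by
  let V := MvPolynomial (l ⊕ l) A
  let K := FractionRing V
  suffices generic : evalMatrix (blockAntidiag (fun i ↦ (X (.inl i) : V)) fun i ↦ X (.inr i)) f =
      evalMatrix (blockAntidiag 1 fun i ↦ X (.inl i) * X (.inr i)) f by
    simpa [map_evalMatrix, blockAntidiag_map, aeval_restrictAntidiag, Pi.one_def] using
      congrArg (aeval (Sum.elim b c)) generic
  have isUnit_X (i : l ⊕ l) : IsUnit (algebraMap V K (X i)) :=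
    IsLocalization.map_units K ⟨X i, isRegular_X.mem_nonZeroDivisors⟩
  -- Squaring the variables makes the generic `b i` squares of units.
  let φ : V →ₐ[A] K := (Algebra.algHom A V K).comp (expand 2)
  have φ_injective : Function.Injective φ :=
    (IsFractionRing.injective V K).comp (expand_injective two_pos)
  have φ_X (i : l ⊕ l) : φ (X i) = algebraMap V K (X i) ^ 2 := by
    rw [← map_pow, ← expand_X]
    rfl
  refine φ_injective ?_
  rw [map_evalMatrix, map_evalMatrix, blockAntidiag_map, blockAntidiag_map]
  simp only [map_mul, φ_X, Pi.one_apply, map_one]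
  exact hf.evalMatrix_blockAntidiag_sq (fun i ↦ (isUnit_X (.inl i)).unit)
    fun i ↦ algebraMap V K (X (.inr i)) ^ 2

theorem evalMatrix_spOfSym_X_eq_zero (hf : IsSpInvariant f) (h : restrictAntidiag f = 0) :
    evalMatrix (spOfSym X : Matrix (l ⊕ l) (l ⊕ l) (MvPolynomial (Sym2 (l ⊕ l)) A)) f = 0 := by
  obtain ⟨B, _, _, d, hAB, hd⟩ := exists_pairwise_isUnit_sub A l
  have hd_C : Pairwise fun i j ↦
      IsUnit (C (d i) - C (d j) : MvPolynomial (Sym2 (l ⊕ l)) B) := fun i j hij ↦ by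
    simpa using (hd hij).map C
  obtain ⟨P, hP, b, c, jet⟩ := exists_conj_blockAntidiag_hasJet hd_C (spOfSym_mem_sp X)
  obtain ⟨y, hy⟩ := exists_spOfSym_eq (conj_mem_sp hP (blockAntidiag_mem_sp b c))
  obtain ⟨x, hx⟩ := exists_spOfSym_eq (blockAntidiag_mem_sp 1 d)
  obtain ⟨jet₀, jet₁⟩ := hy ▸ jet
  rw [spOfSym_map] at jet₀ jet₁
  have base_point : spOfSym (fun s ↦ (C (x s) : MvPolynomial (Sym2 (l ⊕ l)) B)) =
      blockAntidiag 1 fun i ↦ C (d i) := by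
    rw [← spOfSym_map, hx, blockAntidiag_map]
    simp [Pi.one_def]
  refine eq_zero_of_aeval_generic_arc_eq_zero hAB
    (fun s ↦ congrFun (spOfSym_injective (jet₀.trans base_point.symm)) s)
    (fun s ↦ congrFun (spOfSym_injective jet₁) s) ?_
  rw [map_evalMatrix, spOfSym_map]
  simp only [aeval_X]
  rw [hy, hf _ P _ hP (blockAntidiag_mem_sp b c), hf.evalMatrix_blockAntidiag, h, map_zero]

theorem evalMatrix_eq_zero (hf : IsSpInvariant f) (h : restrictAntidiag f = 0) {R : Type*}
    [CommRing R] [Algebra A R] {M : Matrix (l ⊕ l) (l ⊕ l) R} (hM : M ∈ sp l R) :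
    evalMatrix M f = 0 := by
  obtain ⟨y, rfl⟩ := exists_spOfSym_eq hM
  simpa [map_evalMatrix, spOfSym_map] using
    congrArg (aeval y) (hf.evalMatrix_spOfSym_X_eq_zero h)

end IsSpInvariant

end Invariants

section CharpolyCoefficients

open LieAlgebra.Symplectic (sp)

section

variable {m A R : Type*} [Fintype m] [DecidableEq m] [CommRing A] [CommRing R] [Algebra A R] {n : ℕ}

/-- The coefficient `c_{2(k + 1)}` of the characteristic polynomial of a matrix of size `2n`, that
is, the coefficient of `t ^ (2n - 2(k + 1))`. -/
noncomputable def evenCharpolyCoeff (M : Matrix m m R) (k : Fin n) : R :=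
  M.charpoly.coeff (2 * n - 2 * (k + 1))

theorem evenCharpolyCoeff_map {S : Type*} [CommRing S] (φ : R →+* S) (M : Matrix m m R)
    (k : Fin n) : evenCharpolyCoeff (M.map φ) k = φ (evenCharpolyCoeff M k) := by
  rw [evenCharpolyCoeff, charpoly_map, Polynomial.coeff_map, evenCharpolyCoeff]

theorem evalMatrix_aeval_evenCharpolyCoeff (M : Matrix m m R) (g : MvPolynomial (Fin n) A) :
    evalMatrix M (aeval (evenCharpolyCoeff (mvPolynomialX m m A)) g) =
      aeval (evenCharpolyCoeff M) g := by
  have map_generic : (mvPolynomialX m m A).map (evalMatrix M : _ →ₐ[A] R) = M := by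
    ext; simp [evalMatrix]
  rw [← AlgHom.comp_apply, comp_aeval]
  conv_rhs => rw [← map_generic]
  congr 2
  ext1 k
  exact (evenCharpolyCoeff_map (evalMatrix M : _ →ₐ[A] R).toRingHom _ k).symm

end

variable {A : Type u} {l : Type v} [Fintype l] [DecidableEq l] [CommRing A] {n : ℕ}

theorem evenCharpolyCoeff_blockAntidiag_one_X (hl : Fintype.card l = n) (k : Fin n) :
    evenCharpolyCoeff (blockAntidiag 1 (X : l → MvPolynomial l A)) k =
      (-1) ^ (k + 1 : ℕ) * esymm l A (k + 1) := by
  have hk : n - (k + 1) ≤ Multiset.card (Finset.univ.val.map (X : l → MvPolynomial l A)) := by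
    simp [hl]
  rw [evenCharpolyCoeff, blockAntidiag, charpoly_fromBlocks_zero₁₁_zero₂₂, Pi.one_def,
    diagonal_one, Matrix.one_mul, charpoly_diagonal, ← Nat.mul_sub, mul_comm,
    Polynomial.coeff_expand_mul two_pos, esymm_eq_multiset_esymm]
  have vieta := Multiset.prod_X_sub_C_coeff _ hk
  rw [Multiset.map_map, Multiset.card_map, Finset.card_val, Finset.card_univ, hl,
    Nat.sub_sub_self k.isLt] at vieta
  exact vieta

theorem exists_aeval_evenCharpolyCoeff_eq (hl : Fintype.card l = n) {p : MvPolynomial l A}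
    (hp : p.IsSymmetric) :
    ∃ g : MvPolynomial (Fin n) A, aeval (evenCharpolyCoeff (blockAntidiag 1 X)) g = p := by
  obtain ⟨g, hg⟩ := esymmAlgHom_surjective A hl.le ⟨p, hp⟩
  refine ⟨aeval (fun k : Fin n ↦ (-1) ^ (k + 1 : ℕ) * X k) g, ?_⟩
  have aeval_esymm : aeval (fun k : Fin n ↦ esymm l A (k + 1)) g = p := by
    rw [← esymmAlgHom_apply, hg]
  rw [← aeval_esymm, ← AlgHom.comp_apply, comp_aeval]
  congr 2
  ext1 k
  rw [map_mul, map_pow, map_neg, map_one, aeval_X, evenCharpolyCoeff_blockAntidiag_one_X hl,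
    ← mul_assoc, ← mul_pow, neg_one_mul, neg_neg, one_pow, one_mul]

theorem isSpInvariant_of_forall_eq_aeval {f : MvPolynomial ((l ⊕ l) × (l ⊕ l)) A}
    {g : MvPolynomial (Fin n) A}
    (hfg : ∀ (R : Type (max u v)) [CommRing R] [Algebra A R] (M : Matrix (l ⊕ l) (l ⊕ l) R),
      M ∈ sp l R → evalMatrix M f = aeval (evenCharpolyCoeff M) g) : IsSpInvariant f := by
  intro R _ _ P M hP hM
  have coeff_conj : (evenCharpolyCoeff (P * M * P⁻¹) : Fin n → R) = evenCharpolyCoeff M := by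
    ext1 k
    rw [evenCharpolyCoeff, charpoly_conj_of_isUnit_det (SymplecticGroup.symplectic_det hP),
      evenCharpolyCoeff]
  rw [hfg R _ (conj_mem_sp hP hM), hfg R M hM, coeff_conj]

theorem IsSpInvariant.exists_eq_aeval (hl : Fintype.card l = n)
    {f : MvPolynomial ((l ⊕ l) × (l ⊕ l)) A} (hf : IsSpInvariant f) :
    ∃ g : MvPolynomial (Fin n) A, ∀ (R : Type (max u v)) [CommRing R] [Algebra A R]
      (M : Matrix (l ⊕ l) (l ⊕ l) R), M ∈ sp l R →
        evalMatrix M f = aeval (evenCharpolyCoeff M) g := by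
  obtain ⟨g, hg⟩ := exists_aeval_evenCharpolyCoeff_eq hl hf.isSymmetric_restrictAntidiag
  let f' : MvPolynomial ((l ⊕ l) × (l ⊕ l)) A :=
    aeval (evenCharpolyCoeff (mvPolynomialX (l ⊕ l) (l ⊕ l) A)) g
  have hf' : IsSpInvariant f' :=
    isSpInvariant_of_forall_eq_aeval fun R _ _ M _ ↦ evalMatrix_aeval_evenCharpolyCoeff M g
  have restrict_eq : restrictAntidiag (f - f') = 0 := by
    rw [map_sub, ← hg, sub_eq_zero]
    exact (evalMatrix_aeval_evenCharpolyCoeff _ g).symm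
  refine ⟨g, fun R _ _ M hM ↦ ?_⟩
  have sub_eq := (hf.sub hf').evalMatrix_eq_zero restrict_eq hM
  rwa [map_sub, evalMatrix_aeval_evenCharpolyCoeff, sub_eq_zero] at sub_eq

end CharpolyCoefficients

/-- Let `A` be a commutative ring, `n ≥ 1`, and `f` a polynomial over
`A` in the `(2n)×(2n)` matrix entry variables (indexed by `(Fin n ⊕ Fin n) × (Fin n ⊕ Fin n)`).
Then `f` is `Sp_{2n}`-invariant on the symplectic Lie algebra — i.e. for every commutative
`A`-algebra `R`, every `P` with `Pᵀ J P = J` and every `M` with `Mᵀ J + J M = 0` one has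
`f(P M P⁻¹) = f(M)` — if and only if there is `g ∈ A[y₁, …, yₙ]` with
`f(M) = g(c₂(M), c₄(M), …, c_{2n}(M))` for all such `M`, where the `cᵢ(M)` are the
coefficients of the characteristic polynomial: `c_{2k}(M) = charpoly(M).coeff (2n − 2k)`.
In other words, the ring of invariant polynomial functions on `sp_{2n}` over `A` is
`A[c₂, c₄, …, c_{2n}]`. -/
theorem statement14 {A : Type u} [CommRing A] (n : ℕ) (hn : 1 ≤ n)
    (f : MvPolynomial ((Fin n ⊕ Fin n) × (Fin n ⊕ Fin n)) A) :
    (∀ (R : Type u) [CommRing R] [Algebra A R]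
        (P M : Matrix (Fin n ⊕ Fin n) (Fin n ⊕ Fin n) R),
        Pᵀ * Matrix.fromBlocks 0 1 (-1) 0 * P = Matrix.fromBlocks 0 1 (-1) 0 →
        Mᵀ * Matrix.fromBlocks 0 1 (-1) 0 + Matrix.fromBlocks 0 1 (-1) 0 * M = 0 →
        aeval (fun p : (Fin n ⊕ Fin n) × (Fin n ⊕ Fin n) => (P * M * P⁻¹) p.1 p.2) f =
          aeval (fun p : (Fin n ⊕ Fin n) × (Fin n ⊕ Fin n) => M p.1 p.2) f) ↔
    (∃ g : MvPolynomial (Fin n) A,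
      ∀ (R : Type u) [CommRing R] [Algebra A R]
        (M : Matrix (Fin n ⊕ Fin n) (Fin n ⊕ Fin n) R),
        Mᵀ * Matrix.fromBlocks 0 1 (-1) 0 + Matrix.fromBlocks 0 1 (-1) 0 * M = 0 →
        aeval (fun p : (Fin n ⊕ Fin n) × (Fin n ⊕ Fin n) => M p.1 p.2) f =
          aeval (fun k : Fin n => M.charpoly.coeff (2 * n - 2 * ((k : ℕ) + 1))) g) := by
  simp only [← mem_symplecticGroup_iff_fromBlocks, ← mem_sp_iff_fromBlocks]
  exact ⟨fun hf ↦ IsSpInvariant.exists_eq_aeval (Fintype.card_fin n) hf,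
    fun ⟨_, hg⟩ ↦ isSpInvariant_of_forall_eq_aeval hg⟩
end
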